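/- Integrality of the Schur lattice under divided powers: for i ∈ {0,1}, let ℒ_i ⊆ W_i be the ℤ[q,q^{−1}]-submodule spanned by the vectors s_λ e^{mα}e^{iα/2}, where λ runs over all partitions and m over ℤ. Then for every n ∈ ℤ and r ≥ 1, X_n^{+(r)}(ℒ_i) ⊆ ℒ_i and X_n^{−(r)}(ℒ_i) ⊆ ℒ_i. -/

import Mathlib

/-! Write `Λ` for the ring of symmetric functions over `ℚ(q)` and
`𝒜 = ℤ[q,q⁻¹][h₁,h₂,…] ⊆ Λ` (`intA`).
By the Jacobi–Trudi determinant and its triangularity, `𝒜` is the `ℤ[q,q⁻¹]`-span of the Schur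
functions (`schurF_mem`, `prod_hhF_mem`, `single_mem`), so the lattice consists of the vectors with
all components in `𝒜`. It has to be shown that `X_n^±`, applied `r` times to `P e^{mα}` with
`P ∈ 𝒜`, gives an element of `[r]! 𝒜` times a power of `e^α`.

*One vertex operator.* By Taylor's formula (`DopF_genFamF`) the annihilation half of `X^±` is the
substitution `D : p_n ↦ p_n + d_n wⁿ`, with `d_n = -q⁻ⁿ` for `X⁺` and `d_n = 1` for `X⁻`. Hence
`X_n^±` acts by `P ↦ φ_c(D P)`, where `φ_c` is the `Λ`-linear map `w^j ↦ H_{c+j}`, the `H_k` being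
the creation coefficients and `c` depending on `n`, `m` and `i` (`sum_DopF_eq_phi1`, `Xp_eq`, `Xm_eq`).
The generating series `H(z) = ∑ H_k z^k` satisfies `D(H(z)) = H(z)(1 - w z)(1 - t w z)`, with
`t = q⁻²` for `X⁺` and `t = q²` for `X⁻` (`map_Dsub_two`, `Dsub_genZ`).

*Iteration.* Each application changes `c` by `-2`, which exactly absorbs the degree of the
contraction factors. With `Φ` the `Λ`-linear map sending `∏ w_i^{k_i}` to `∏ H_{b+k_i}`, a further
application multiplies the argument of `Φ` by `∏_{i<r} (w_i - w_r)(w_i - t w_r)` (`step`). The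
factors `w_i - w_r` build up the Vandermonde product. Since `Φ` is symmetric, multiplying by the Vandermonde
product makes it antisymmetric, and an antisymmetric functional sends
`∏_{i<r} (w_i - t w_r) w_i^i` to `±(1 + t + ⋯ + t^r)` times its value at `∏_{i≤r} w_i^i`
(`antisymm_expand`). Therefore the `r`-fold iterate is
`∏_{k=1}^r (1 + t + ⋯ + t^{k-1}) · Φ(∏ w_i^i · ∏_{i<j} (w_j - w_i) · D^{(r)} P)` (`iterX_eq`), where
`D^{(r)} : p_n ↦ p_n + d_n ∑_{i<r} w_iⁿ`. The scalar is `[r]!` up to a power of `q` (`tfact_sq`,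
`tfact_inv_sq`).

*Integrality.* The remaining factor lies in `𝒜`: the `H_k` do, because their generating series are
`h(q z) h(q⁻¹ z)` and `1/(h(z) h(q² z))` with `h(z) = ∑ h_k z^k` (`HZp_mem`, `HZm_mem`), and `D`
preserves integrality because it sends `h(z)` to `h(z)(1 - q⁻¹ w z)` and to `h(z)/(1 - w z)` respectively
(`Dsub_p_mem`, `Dsub_m_mem`).
-/

open MvPolynomial

noncomputable section

/-- The base field `F = ℚ(q)`. -/
abbrev Fq : Type := RatFunc ℚ

/-- The indeterminate `q ∈ ℚ(q)`. -/
def qq : Fq := RatFunc.X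

/-- `Λ_F = F[p₁,p₂,…]`, with the variable `X n` (for `n : ℕ+`) the power sum `p_n`. -/
abbrev LamF : Type := MvPolynomial ℕ+ Fq

/-- The power sum `p_n`. -/
def ppF (n : ℕ+) : LamF := X n

/-- The family `g` with generating function `∑_k g_k t^k = exp (∑_{n≥1} c n · p_n tⁿ/n)`,
characterized by `g 0 = 1` and the recursion obtained by differentiating:
`(k+1) · g (k+1) = ∑_{i=0}^{k} c (i+1) · p_{i+1} · g (k−i)`. -/
def genFamF (c : ℕ → Fq) : ℕ → LamF
  | 0 => 1
  | (k+1) => (((k : Fq) + 1)⁻¹) •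
      ∑ i ∈ Finset.range (k+1), c (i+1) • (ppF ⟨i+1, Nat.succ_pos i⟩ * genFamF c (k - i))
  decreasing_by exact Nat.lt_succ_of_le (Nat.sub_le k i)

/-- The complete homogeneous symmetric function `h_k`. -/
def hhF : ℕ → LamF := genFamF fun _ => 1

/-- The elementary symmetric function `e_k`. -/
def eeF : ℕ → LamF := genFamF fun n => (-1)^(n+1)

/-- `h` indexed by `ℤ` (zero in negative degrees). -/
def hZF (n : ℤ) : LamF := if 0 ≤ n then hhF n.toNat else 0

/-- `e` indexed by `ℤ` (zero in negative degrees). -/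
def eZF (n : ℤ) : LamF := if 0 ≤ n then eeF n.toNat else 0

/-- The creation coefficients of `X⁺(z)`:
`exp (∑ ((1+q^{2n})q^{−n}/n)·p_n·zⁿ) = ∑_k HpF k · z^k`. -/
def HpF : ℕ → LamF := genFamF fun n => (1 + qq ^ (2*n)) * (qq⁻¹) ^ n

/-- `HpF` indexed by `ℤ`. -/
def HZp (n : ℤ) : LamF := if 0 ≤ n then HpF n.toNat else 0

/-- The annihilation avatars for `X⁺(z)`: since
`(1+q^{2n})q^{−n}/n · a_n = q^{−n}·∂/∂p_n`, the coefficient of `z^{−j}` in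
`exp (−∑ ((1+q^{2n})q^{−n}/n)·a_n·z^{−n})` is `ApF j` with `p_i ↦ i·∂/∂p_i`
substituted, where `∑_k ApF k t^k = exp (−∑ q^{−n} p_n tⁿ/n)`. -/
def ApF : ℕ → LamF := genFamF fun n => -((qq⁻¹) ^ n)

/-- The creation coefficients of `X⁻(z)`:
`exp (−∑ ((1+q^{2n})/n)·p_n·zⁿ) = ∑_k HmF k · z^k`. -/
def HmF : ℕ → LamF := genFamF fun n => -(1 + qq ^ (2*n))

/-- `HmF` indexed by `ℤ`. -/
def HZm (n : ℤ) : LamF := if 0 ≤ n then HmF n.toNat else 0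

/-- The differential operator `∏_i (i·∂/∂p_i)^(α i)`. -/
def monOpF (α : ℕ+ →₀ ℕ) : Module.End Fq LamF :=
  ((α.support.sort (· ≤ ·)).map fun (i : ℕ+) =>
    (((i : ℕ) : Fq) • (pderiv i).toLinearMap) ^ (α i)).prod

/-- `f(∂) P`: substitute `p_i ↦ i·∂/∂p_i` in `f` and apply to `P`. -/
def DopF (f : LamF) (P : LamF) : LamF := ∑ α ∈ f.support, f.coeff α • monOpF α P

/-- Bound for the weighted degree of `P` (weight of `p_i` is `i`). -/
def wboundF (P : LamF) : ℕ := P.support.sup fun α => α.sum fun i k => (i : ℕ) * k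

/-- The level-one Fock space `W_i = Λ_F ⊗ F[ℤα]e^{iα/2}`, realized as `ℤ →₀ Λ_F`;
`Finsupp.single m P` represents `P·e^{mα}e^{iα/2}`. -/
abbrev W : Type := ℤ →₀ LamF

/-- The Drinfeld current component `X_n^+` on `W_i` (the parameter `i ∈ {0,1}` enters
through `z^∂ e^{mα}e^{iα/2} = z^{2m+i} e^{mα}e^{iα/2}`): the coefficient of `z^{−n−1}` in
`X⁺(z) = exp(∑((1+q^{2n})q^{−n}/n)a_{−n}zⁿ)·exp(−∑((1+q^{2n})q^{−n}/n)a_n z^{−n})·e^α z^∂`,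
i.e. `X_n^+(P·e^{mα}) = ∑_j HpF_{j−n−1−2m−i} · (ApF j)(∂) P · e^{(m+1)α}`
(only the finitely many `j ≤ wboundF P` contribute). -/
def Xp (i n : ℤ) (w : W) : W :=
  w.sum fun m P => Finsupp.single (m+1)
    (∑ j ∈ Finset.range (wboundF P + 1),
      HZp ((j : ℤ) - n - 1 - 2*m - i) * DopF (ApF j) P)

/-- The Drinfeld current component `X_n^-` on `W_i`: the coefficient of `z^{−n−1}` in
`X⁻(z) = exp(−∑((1+q^{2n})/n)a_{−n}zⁿ)·exp(∑((1+q^{2n})/n)a_n z^{−n})·e^{−α} z^{−∂}`,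
i.e. `X_n^-(P·e^{mα}) = ∑_j HmF_{j+2m+i−n−1} · h_j(∂) P · e^{(m−1)α}`
(here `(1+q^{2n})/n · a_n = ∂/∂p_n`, whose generating family is `h`). -/
def Xm (i n : ℤ) (w : W) : W :=
  w.sum fun m P => Finsupp.single (m-1)
    (∑ j ∈ Finset.range (wboundF P + 1),
      HZm ((j : ℤ) + 2*m + i - n - 1) * DopF (hhF j) P)

/-- The `q`-factorial `[r]! = ∏_{k=1}^r (q^k − q^{−k})/(q − q^{−1})`. -/
def qfact (r : ℕ) : Fq := ∏ k ∈ Finset.range r, (qq ^ (k+1) - (qq⁻¹) ^ (k+1)) / (qq - qq⁻¹)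

/-- The divided power `x^{(r)} = x^r / [r]!` of an operator on `W`. -/
def divpow (f : W → W) (r : ℕ) (w : W) : W := (qfact r)⁻¹ • (f^[r] w)

/-- Schur function of an integer tuple: `s_ρ = det (h_{ρ_i − i + j})`. -/
def schurF {l : ℕ} (ρ : Fin l → ℤ) : LamF :=
  (Matrix.of fun i j : Fin l => hZF (ρ i - (i.1 : ℤ) + (j.1 : ℤ))).det

/-- Dual Schur function of an integer tuple: `s_{ρ'} = det (e_{ρ_i − i + j})`. -/
def schurEF {l : ℕ} (ρ : Fin l → ℤ) : LamF :=
  (Matrix.of fun i j : Fin l => eZF (ρ i - (i.1 : ℤ) + (j.1 : ℤ))).det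

/-- `q^{±∂}`: `q^{ε∂}(P·e^{mα}e^{iα/2}) = q^{ε(2m+i)}·P·e^{mα}e^{iα/2}`. -/
def qd (i ε : ℤ) (w : W) : W := w.sum fun m P => Finsupp.single m (qq ^ (ε * (2*m + i)) • P)

/-- The Chevalley generator `e₁ = X₀⁺`. -/
def che1 (i : ℤ) : W → W := Xp i 0
/-- The Chevalley generator `f₁ = X₀⁻`. -/
def chf1 (i : ℤ) : W → W := Xm i 0
/-- The Chevalley generator `e₀ = X₁⁻ ∘ q^{−∂}`. -/
def che0 (i : ℤ) (w : W) : W := Xm i 1 (qd i (-1) w)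
/-- The Chevalley generator `f₀ = q^∂ ∘ X₋₁⁺`. -/
def chf0 (i : ℤ) (w : W) : W := qd i 1 (Xp i (-1) w)


/-- The `ℤ[q,q⁻¹]`-lattice `ℒ ⊆ W` spanned by the vectors `s_λ e^{mα}e^{iα/2}`
(`λ` a partition, `m ∈ ℤ`): equivalently, the additive subgroup generated by all
`q^k · s_λ e^{mα}e^{iα/2}` with `k ∈ ℤ`. -/
def SchurLattice : AddSubgroup W :=
  AddSubgroup.closure
    {w | ∃ (k m : ℤ) (l : ℕ) (lam : Fin l → ℕ), Antitone lam ∧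
      w = qq ^ k • Finsupp.single m (schurF fun a => (lam a : ℤ))}

/-! ### Antisymmetric functionals and the Vandermonde product -/

section Antisymmetric

variable {A : Type*} [CommRing A]

lemma rename_swap_prod_lt (g : ℕ → MvPolynomial ℕ A) (i : ℕ) (s : Finset ℕ)
    (h : ∀ a ∈ s, rename (Equiv.swap i (i+1)) (g a) = g a) :
    rename (Equiv.swap i (i+1)) (∏ a ∈ s, g a) = ∏ a ∈ s, g a := by
  rw [map_prod]
  exact Finset.prod_congr rfl h

lemma swap_lt {i a : ℕ} (h : a ≠ i) (h' : a ≠ i + 1) : Equiv.swap i (i+1) a = a :=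
  Equiv.swap_apply_of_ne_of_ne h h'

lemma antisymm_zero [NoZeroDivisors A] [CharZero A] (L : MvPolynomial ℕ A →ₗ[A] A) (i : ℕ)
    (hL : ∀ f, L (rename (Equiv.swap i (i+1)) f) = - L f) (f : MvPolynomial ℕ A)
    (hf : rename (Equiv.swap i (i+1)) f = f) : L f = 0 := by
  have h := hL f
  rw [hf] at h
  exact self_eq_neg.mp h

/-- The pure power `w_k^{k-m}` can be moved past the factors `w_i - t w_k`, `i < m`: expanding the last
of them, the `w_{m-1}` term leaves the two variables `w_{m-1}, w_m` with equal exponents `m`, so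
antisymmetry kills it and only the factor `-t` survives. -/
lemma antisymm_tail [NoZeroDivisors A] [CharZero A] (L : MvPolynomial ℕ A →ₗ[A] A) (r : ℕ) (t : A)
    (hL : ∀ i < r, ∀ f, L (rename (Equiv.swap i (i+1)) f) = - L f) (k : ℕ) (hk : k ≤ r) (m : ℕ)
    (hm : m < k) :
    L ((∏ i ∈ Finset.range m, ((X i - C t * X k) * X i ^ i)) * X k ^ (k - m) *
        (∏ i ∈ Finset.Ico m k, X i ^ i) * ∏ i ∈ Finset.Ico (k+1) (r+1), X i ^ i)
      = (-t) ^ m * L (∏ i ∈ Finset.range (r+1), X i ^ i) := by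
  induction m with
  | zero =>
    simp only [Finset.range_zero, Finset.prod_empty, one_mul, pow_zero, Nat.sub_zero]
    congr 1
    rw [mul_comm (X k ^ k), ← Finset.prod_Ico_succ_top (Nat.zero_le k),
      Finset.prod_Ico_consecutive _ (Nat.zero_le _) (by omega), Finset.range_eq_Ico]
  | succ m ih =>
    specialize ih (by omega)
    -- write `k = m + 2 + e`; the discarded term is symmetric in `w_m` and `w_{m+1}`
    obtain ⟨e, rfl⟩ : ∃ e, k = m + 2 + e := ⟨k - (m+2), by omega⟩
    have h0 := antisymm_zero L m (hL m (by omega))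
      ((∏ i ∈ Finset.range m, ((X i - C t * X (m+2+e)) * X i ^ i)) * X (m+2+e) ^ (e + 1) *
        (X m ^ (m+1) * X (m+1) ^ (m+1)) *
        (∏ i ∈ Finset.Ico (m+2) (m+2+e), X i ^ i) *
          ∏ i ∈ Finset.Ico (m+2+e+1) (r+1), X i ^ i) (by
        simp only [map_mul, map_pow, rename_X, Equiv.swap_apply_left, Equiv.swap_apply_right]
        rw [rename_swap_prod_lt, rename_swap_prod_lt, rename_swap_prod_lt,
          swap_lt (by omega) (by omega)]
        · ring
        all_goals
          intro a ha
          simp only [Finset.mem_Ico, Finset.mem_range] at ha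
          simp only [map_mul, map_pow, map_sub, rename_X, rename_C]
        · rw [swap_lt (by omega) (by omega)]
        · rw [swap_lt (by omega) (by omega)]
        · rw [swap_lt (a := a) (by omega) (by omega), swap_lt (by omega) (by omega)])
    rw [pow_succ, mul_comm _ (-t), mul_assoc (-t), ← ih]
    rw [← smul_eq_mul (-t), ← map_smul, ← sub_eq_zero, ← map_sub]
    rw [← h0]
    congr 1
    rw [show m + 2 + e - (m+1) = e + 1 by omega, show m + 2 + e - m = e + 2 by omega,
      Finset.prod_range_succ, Finset.prod_eq_prod_Ico_succ_bot (show m < m+2+e by omega),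
      Finset.prod_eq_prod_Ico_succ_bot (show m + 1 < m+2+e by omega), MvPolynomial.smul_eq_C_mul,
      C_neg]
    ring

/-- Induction on `k` for `antisymm_expand`, with the variables beyond `w_k` carrying their staircase
exponents. Expanding the last factor `w_k - t w_{k+1}`, the first term becomes the case of `k` after
exchanging `w_k` and `w_{k+1}`, and the second is evaluated by `antisymm_tail`; together they give
`-(1 + ⋯ + t^k) L₀ - t^{k+1} L₀` up to the sign `(-1)^k`, where `L₀ = L(∏ w_i^i)`. -/
lemma antisymm_expand_aux [NoZeroDivisors A] [CharZero A] (L : MvPolynomial ℕ A →ₗ[A] A) (r : ℕ) (t : A)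
    (hL : ∀ i < r, ∀ f, L (rename (Equiv.swap i (i+1)) f) = - L f) (k : ℕ) (hk : k ≤ r) :
    L ((∏ i ∈ Finset.range k, ((X i - C t * X k) * X i ^ i)) *
        ∏ i ∈ Finset.Ico (k+1) (r+1), X i ^ i)
      = (-1) ^ k * (∑ j ∈ Finset.range (k+1), t ^ j) *
          L (∏ i ∈ Finset.range (r+1), X i ^ i) := by
  induction k with
  | zero =>
    rw [Finset.range_eq_Ico (r + 1),
      Finset.prod_eq_prod_Ico_succ_bot (show 0 < r + 1 by omega)]
    simp
  | succ k ih =>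
    specialize ih (by omega)
    have h1 := antisymm_tail L r t hL (k+1) hk k (by omega)
    have h2 := hL k (by omega) ((∏ i ∈ Finset.range k, ((X i - C t * X k) * X i ^ i)) *
        ∏ i ∈ Finset.Ico (k+1) (r+1), X i ^ i)
    rw [ih, Finset.prod_eq_prod_Ico_succ_bot (show k + 1 < r + 1 by omega)] at h2
    simp only [map_mul, map_pow, rename_X, Equiv.swap_apply_right] at h2
    rw [rename_swap_prod_lt _ k (Finset.Ico _ _), map_prod] at h2
    swap
    · intro a ha
      simp only [Finset.mem_Ico] at ha
      simp only [map_pow, rename_X]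
      rw [swap_lt (by omega) (by omega)]
    have h3 : (∏ x ∈ Finset.range k, rename (R := A) (Equiv.swap k (k+1)) ((X x - C t * X k) * X x ^ x))
        = ∏ x ∈ Finset.range k, ((X x - C t * X (k+1)) * X x ^ x) := by
      refine Finset.prod_congr rfl fun a ha => ?_
      simp only [Finset.mem_range] at ha
      simp only [map_mul, map_pow, map_sub, rename_X, rename_C, Equiv.swap_apply_left]
      rw [swap_lt (by omega) (by omega)]
    rw [h3] at h2
    rw [show k + 1 - k = 1 by omega] at h1
    rw [Finset.prod_range_succ]
    have h4 : ((∏ x ∈ Finset.range k, (X x - C t * X (k + 1)) * X x ^ x) *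
        ((X k - C t * X (k + 1)) * X k ^ k)) * ∏ i ∈ Finset.Ico (k + 1 + 1) (r + 1), X i ^ i
        = (∏ x ∈ Finset.range k, (X x - C t * X (k + 1)) * X x ^ x) *
          (X k ^ (k + 1) * ∏ k ∈ Finset.Ico (k + 1 + 1) (r + 1), X k ^ k)
         - t • ((∏ i ∈ Finset.range k, (X i - C t * X (k + 1)) * X i ^ i) * X (k + 1) ^ 1 *
          (∏ i ∈ Finset.Ico k (k + 1), X i ^ i) *
        ∏ i ∈ Finset.Ico (k + 1 + 1) (r + 1), X i ^ i) := by
      rw [MvPolynomial.smul_eq_C_mul, Nat.Ico_succ_singleton, Finset.prod_singleton]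
      ring
    rw [h4, map_sub, map_smul, h1, h2, smul_eq_mul, Finset.sum_range_succ _ (k+1)]
    rw [neg_pow t k]
    ring

/-- A functional antisymmetric in `w_0, …, w_r` sends `∏_{i<r} (w_i - t w_r) w_i^i` to
`± (1 + t + ⋯ + t^r)` times its value at the staircase monomial `∏ w_i^i`. This is the source of
the quantum integers in the powers of the currents. -/
lemma antisymm_expand [NoZeroDivisors A] [CharZero A] (L : MvPolynomial ℕ A →ₗ[A] A) (r : ℕ) (t : A)
    (hL : ∀ i < r, ∀ f, L (rename (Equiv.swap i (i+1)) f) = - L f) :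
    L (∏ i ∈ Finset.range r, ((X i - C t * X r) * X i ^ i))
      = (-1) ^ r * (∑ j ∈ Finset.range (r+1), t ^ j) *
          L (∏ i ∈ Finset.range (r+1), X i ^ i) := by
  simpa using antisymm_expand_aux L r t hL r le_rfl

/-- The Vandermonde product `∏_{i<j<r} (w_j - w_i)`. -/
def vdm (A : Type*) [CommRing A] (r : ℕ) : MvPolynomial ℕ A :=
  ∏ j ∈ Finset.range r, ∏ i ∈ Finset.range j, (X j - X i)

lemma prod_range_swap {M : Type*} [CommMonoid M] (g : ℕ → M) (i N : ℕ) (h : i + 1 < N) :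
    ∏ a ∈ Finset.range N, g (Equiv.swap i (i+1) a) = ∏ a ∈ Finset.range N, g a := by
  refine Finset.prod_equiv (Equiv.swap i (i+1)) (fun a => ?_) (fun _ _ => rfl)
  simp only [Finset.mem_range, Equiv.swap_apply_def]
  split_ifs <;> omega

lemma rename_vdm (i r : ℕ) (h : i + 1 < r) :
    rename (Equiv.swap i (i+1)) (vdm A r) = - vdm A r := by
  induction r with
  | zero => omega
  | succ r ih =>
    unfold vdm at ih ⊢
    rw [Finset.prod_range_succ, map_mul]
    by_cases hr : i + 1 < r
    · rw [ih hr, map_prod]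
      simp only [map_sub, rename_X]
      rw [prod_range_swap (fun a => X (Equiv.swap i (i+1) r) - X a) i r hr,
        swap_lt (by omega) (by omega)]
      ring
    · obtain rfl : r = i + 1 := by omega
      rw [Finset.prod_range_succ, Finset.prod_range_succ]
      simp only [map_mul, map_prod, map_sub, rename_X, Equiv.swap_apply_left,
        Equiv.swap_apply_right]
      have e : ∀ a < i, Equiv.swap i (i+1) a = a := fun a ha => swap_lt (by omega) (by omega)
      have e1 : ∏ x ∈ Finset.range i, ∏ x_1 ∈ Finset.range x,
          ((X (Equiv.swap i (i+1) x) : MvPolynomial ℕ A) - X (Equiv.swap i (i+1) x_1))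
          = ∏ x ∈ Finset.range i, ∏ x_1 ∈ Finset.range x, (X x - X x_1) := by
        refine Finset.prod_congr rfl fun j hj => Finset.prod_congr rfl fun a ha => ?_
        simp only [Finset.mem_range] at ha hj
        rw [e j hj, e a (by omega)]
      have e2 : ∀ c : MvPolynomial ℕ A,
          ∏ x ∈ Finset.range i, (c - X (Equiv.swap i (i+1) x))
          = ∏ x ∈ Finset.range i, (c - X x) := fun c =>
        Finset.prod_congr rfl fun a ha => by rw [e a (by simpa using ha)]
      rw [e1, e2, e2]
      ring

/-- The linear functional `Φ_{b,N}`, `w^k ↦ ∏_{i<N} H_{b + k_i}`. -/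
def Phi (H : ℤ → A) (b : ℤ) (N : ℕ) : MvPolynomial ℕ A →ₗ[A] A :=
  (basisMonomials ℕ A).constr A (fun k => ∏ i ∈ Finset.range N, H (b + k i))

lemma Phi_monomial (H : ℤ → A) (b : ℤ) (N : ℕ) (k : ℕ →₀ ℕ) (a : A) :
    Phi H b N (monomial k a) = a * ∏ i ∈ Finset.range N, H (b + k i) := by
  have : monomial k a = a • (basisMonomials ℕ A k) := by simp [smul_monomial]
  rw [this, map_smul, Phi, Module.Basis.constr_basis, smul_eq_mul]

lemma Phi_rename (H : ℤ → A) (b : ℤ) (i N : ℕ) (h : i + 1 < N) (f : MvPolynomial ℕ A) :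
    Phi H b N (rename (Equiv.swap i (i+1)) f) = Phi H b N f := by
  induction f using MvPolynomial.induction_on' with
  | monomial k a =>
    rw [rename_monomial, Phi_monomial, Phi_monomial, ← Finsupp.equivMapDomain_eq_mapDomain]
    simp only [Finsupp.equivMapDomain_apply, Equiv.symm_swap]
    rw [prod_range_swap (fun a => H (b + k a)) i N h]
  | add p q hp hq => simp only [map_add, hp, hq]

end Antisymmetric

/-! ### Iterating a one-variable vertex operator -/

section VertexStep

variable {A : Type*} [CommRing A]

/-- The linear functional `φ_c`, `w^j ↦ H_{c+j}` on one-variable polynomials. -/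
def phi1 (H : ℤ → A) (c : ℤ) : Polynomial A →ₗ[A] A :=
  (Polynomial.basisMonomials A).constr A (fun j => H (c + j))

lemma phi1_monomial (H : ℤ → A) (c : ℤ) (j : ℕ) (a : A) :
    phi1 H c (Polynomial.monomial j a) = a * H (c + j) := by
  have : Polynomial.monomial j a = a • (Polynomial.basisMonomials A j) := by
    simp [Polynomial.smul_monomial]
  rw [this, map_smul, phi1, Module.Basis.constr_basis, smul_eq_mul]

lemma phi1_C_mul (H : ℤ → A) (c : ℤ) (a : A) (f : Polynomial A) :
    phi1 H c (Polynomial.C a * f) = a * phi1 H c f := by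
  rw [← Polynomial.smul_eq_C_mul, map_smul, smul_eq_mul]

lemma Phi_C_mul (H : ℤ → A) (b : ℤ) (N : ℕ) (a : A) (f : MvPolynomial ℕ A) :
    Phi H b N (C a * f) = a * Phi H b N f := by
  rw [← MvPolynomial.smul_eq_C_mul, map_smul, smul_eq_mul]

lemma Phi_prod (H : ℤ → A) (b : ℤ) (N : ℕ) (k : ℕ → ℕ) :
    Phi H b N (∏ i ∈ Finset.range N, X i ^ k i) = ∏ i ∈ Finset.range N, H (b + k i) := by
  have : (∏ i ∈ Finset.range N, X i ^ k i : MvPolynomial ℕ A)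
      = monomial (∑ i ∈ Finset.range N, Finsupp.single i (k i)) 1 := by
    rw [monomial_sum_one]
    exact Finset.prod_congr rfl fun i _ => by rw [X_pow_eq_monomial]
  rw [this, Phi_monomial, one_mul]
  refine Finset.prod_congr rfl fun i hi => ?_
  rw [Finsupp.finsetSum_apply]
  simp only [Finsupp.single_apply]
  rw [Finset.sum_ite_eq' (Finset.range N) i k, if_pos hi]

lemma prod_update_pow (r s e : ℕ) (hs : s < r) (k : ℕ → ℕ) :
    (∏ i ∈ Finset.range r, X i ^ (Function.update k s (k s + e) i) : MvPolynomial ℕ A)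
      = X s ^ e * ∏ i ∈ Finset.range r, X i ^ k i := by
  have hs' : s ∈ Finset.range r := by simpa using hs
  rw [← Finset.mul_prod_erase _ _ hs', ← Finset.mul_prod_erase _ (fun i => X i ^ k i) hs',
    Function.update_self, pow_add]
  rw [Finset.prod_congr rfl (fun i hi => by
    rw [Function.update_of_ne (Finset.ne_of_mem_erase hi)])]
  ring

/-- The case of `step` on monomials, for the first `s` variables: each contraction `D(H_n)` accounts
for one quadratic factor `(w_i - w_r)(w_i - t w_r)`, the shift of the index by `2` matching the
degree of that factor. -/
lemma step_core (H : ℤ → A) (D : A →+* Polynomial A) (t : A)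
  (hH : ∀ n : ℤ, D (H n) = Polynomial.C (H n)
    - Polynomial.C (1 + t) * Polynomial.X * Polynomial.C (H (n-1))
    + Polynomial.C t * Polynomial.X ^ 2 * Polynomial.C (H (n-2)))
    (c : ℤ) (r s : ℕ) (hs : s ≤ r) : ∀ (k : ℕ → ℕ) (f : Polynomial A),
    Phi H c (r+1) ((∏ i ∈ Finset.range s, ((X i - X r) * (X i - C t * X r))) *
        (∏ i ∈ Finset.range r, X i ^ k i) * Polynomial.aeval (X r) f)
      = phi1 H c (f * ∏ i ∈ Finset.range s, D (H (c + 2 + k i))) *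
        ∏ i ∈ Finset.Ico s r, H (c + k i) := by
  induction s with
  | zero =>
    intro k f
    simp only [Finset.range_zero, Finset.prod_empty, one_mul, mul_one]
    induction f using Polynomial.induction_on' with
    | add p q hp hq => simp only [map_add, mul_add, hp, hq, add_mul]
    | monomial j a =>
      have h := Phi_prod H c (r+1) (Function.update k r j)
      rw [Finset.prod_range_succ, Finset.prod_range_succ, Function.update_self] at h
      have e1 : ∀ i ∈ Finset.range r, Function.update k r j i = k i := fun i hi =>
        Function.update_of_ne (by simp only [Finset.mem_range] at hi; omega) _ _
      rw [Finset.prod_congr rfl (fun i hi => by rw [e1 i hi]),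
        Finset.prod_congr (g := fun i => H (c + k i)) rfl (fun i hi => by rw [e1 i hi])] at h
      rw [phi1_monomial, Polynomial.aeval_monomial, MvPolynomial.algebraMap_eq, mul_left_comm,
        Phi_C_mul, h, Finset.range_eq_Ico]
      ring
  | succ s ih =>
    intro k f
    specialize ih (by omega)
    have key : ∀ (e j : ℕ), Phi H c (r+1)
        ((∏ i ∈ Finset.range s, ((X i - X r) * (X i - C t * X r))) *
        (X s ^ e * ∏ i ∈ Finset.range r, X i ^ k i) * (X r ^ j * Polynomial.aeval (X r) f))
        = H (c + (k s + e : ℕ)) * phi1 H c (Polynomial.X ^ j * f *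
            ∏ i ∈ Finset.range s, D (H (c + 2 + k i))) *
          ∏ i ∈ Finset.Ico (s+1) r, H (c + k i) := by
      intro e j
      have h := ih (Function.update k s (k s + e)) (Polynomial.X ^ j * f)
      rw [prod_update_pow r s e hs, map_mul (Polynomial.aeval (X r)), map_pow, Polynomial.aeval_X] at h
      rw [h, Finset.prod_eq_prod_Ico_succ_bot (show s < r by omega), Function.update_self]
      have e1 : ∀ i ∈ Finset.range s, Function.update k s (k s + e) i = k i := fun i hi =>
        Function.update_of_ne (by simp only [Finset.mem_range] at hi; omega) _ _
      have e2 : ∀ i ∈ Finset.Ico (s+1) r, Function.update k s (k s + e) i = k i := fun i hi =>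
        Function.update_of_ne (by simp only [Finset.mem_Ico] at hi; omega) _ _
      rw [Finset.prod_congr rfl (fun i hi => by rw [e1 i hi]),
        Finset.prod_congr (g := fun i => H (c + k i)) rfl (fun i hi => by rw [e2 i hi])]
      ring
    rw [Finset.prod_range_succ, Finset.prod_range_succ, hH]
    set P := (∏ i ∈ Finset.range s, ((X i - X r) * (X i - C t * X r)) : MvPolynomial ℕ A)
    set K := (∏ i ∈ Finset.range r, X i ^ k i : MvPolynomial ℕ A)
    set G := ∏ i ∈ Finset.range s, D (H (c + 2 + k i))
    have e1 : P * ((X s - X r) * (X s - C t * X r)) * K * Polynomial.aeval (X r) f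
       = P * (X s ^ 2 * K) * (X r ^ 0 * Polynomial.aeval (X r) f)
        - C (1 + t) * (P * (X s ^ 1 * K) * (X r ^ 1 * Polynomial.aeval (X r) f))
        + C t * (P * (X s ^ 0 * K) * (X r ^ 2 * Polynomial.aeval (X r) f)) := by
      rw [C_add, C_1]; ring
    have e2 : ∀ x y z : A, f * (G * (Polynomial.C x - Polynomial.C (1 + t) * Polynomial.X * Polynomial.C y +
        Polynomial.C t * Polynomial.X ^ 2 * Polynomial.C z))
       = Polynomial.C x * (Polynomial.X ^ 0 * f * G)
        - Polynomial.C ((1 + t) * y) * (Polynomial.X ^ 1 * f * G)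
        + Polynomial.C (t * z) * (Polynomial.X ^ 2 * f * G) := by
      intro x y z
      rw [Polynomial.C_mul, Polynomial.C_mul]; ring
    rw [e1, e2, map_add (Phi H c (r+1)), map_sub, map_add (phi1 H c), map_sub, Phi_C_mul, Phi_C_mul, key, key, key,
      phi1_C_mul, phi1_C_mul, phi1_C_mul,
      show c + 2 + (k s : ℤ) = c + (k s + 2 : ℕ) by push_cast; ring,
      show c + (k s + 2 : ℕ) - 1 = c + (k s + 1 : ℕ) by push_cast; ring,
      show c + (k s + 2 : ℕ) - 2 = c + (k s + 0 : ℕ) by push_cast; ring]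
    ring

/-- The coefficientwise extension of `D` to polynomials, with new variable `w_r`;
the variables `w_i`, `i ≥ r`, are set to `1`. -/
def Dext (D : A →+* Polynomial A) (r : ℕ) : MvPolynomial ℕ A →+* MvPolynomial ℕ A :=
  eval₂Hom ((Polynomial.aeval (R := A) (X r : MvPolynomial ℕ A)).toRingHom.comp D)
    (fun i => if i < r then X i else 1)

lemma Dext_C (D : A →+* Polynomial A) (r : ℕ) (a : A) : Dext D r (C a) = Polynomial.aeval (X r) (D a) := by
  simp [Dext]

lemma Dext_X (D : A →+* Polynomial A) (r i : ℕ) (h : i < r) : Dext D r (X i) = X i := by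
  simp [Dext, h]

/-- Composing one more vertex operator `P ↦ φ_c(D P)` with `Φ_{c+2,r}` gives `Φ_{c,r+1}`, at the cost
of the contraction factors between the new variable `w_r` and the old ones. The hypothesis on `H`
says `D(H(z)) = H(z)(1 - w z)(1 - t w z)` for the generating series `H(z)`. -/
lemma step (H : ℤ → A) (D : A →+* Polynomial A) (t : A)
  (hH : ∀ n : ℤ, D (H n) = Polynomial.C (H n)
    - Polynomial.C (1 + t) * Polynomial.X * Polynomial.C (H (n-1))
    + Polynomial.C t * Polynomial.X ^ 2 * Polynomial.C (H (n-2)))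
    (c : ℤ) (r : ℕ) (F : MvPolynomial ℕ A) :
    phi1 H c (D (Phi H (c + 2) r F))
      = Phi H c (r+1) ((∏ i ∈ Finset.range r, ((X i - X r) * (X i - C t * X r))) *
          Dext D r F) := by
  induction F using MvPolynomial.induction_on' with
  | add p q hp hq => simp only [map_add, mul_add, hp, hq]
  | monomial k a =>
    have h := step_core H D t hH c r r le_rfl k (D a)
    rw [Finset.Ico_self, Finset.prod_empty, mul_one] at h
    rw [Phi_monomial, map_mul, map_prod, ← h]
    congr 1
    rw [mul_assoc]
    congr 1
    rw [mul_comm, Dext, eval₂Hom_monomial]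
    congr 1
    rw [Finsupp.prod]
    have : ∀ i ∈ k.support, ((if i < r then X i else 1 : MvPolynomial ℕ A)) ^ k i
        = if i ∈ Finset.range r then X i ^ k i else 1 := by
      intro i _
      simp only [Finset.mem_range]
      split_ifs <;> simp
    rw [Finset.prod_congr rfl this, ← Finset.prod_filter]
    symm
    refine Finset.prod_subset_one_on_sdiff ?_ ?_ (fun _ _ => rfl)
    · intro i; simp
    · intro i hi
      simp only [Finset.mem_sdiff, Finset.mem_range, Finset.mem_filter, Finsupp.mem_support_iff] at hi
      have : k i = 0 := by by_contra h; exact hi.2 ⟨h, hi.1⟩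
      simp [this]

/-- The iterated one-variable operator: `iterX r` applies `P ↦ φ_{c}(D P)`, then
`P ↦ φ_{c-2}(D P)`, and so on, `r` times. -/
def iterX (H : ℤ → A) (D : A →+* Polynomial A) (c : ℤ) (P : A) : ℕ → A
  | 0 => P
  | (r+1) => phi1 H (c - 2 * r) (D (iterX H D c P r))

/-- The `t`-factorial `∏_{k=1}^r (1 + t + ⋯ + t^{k-1})`. -/
def tfact (t : A) (r : ℕ) : A := ∏ k ∈ Finset.range r, ∑ j ∈ Finset.range (k+1), t ^ j

/-- The `r`-fold iterate of a vertex operator is divisible by the `t`-factorial, with an explicit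
quotient. Here `Dm r` is the `r`-variable version of `D`, symmetric in `w_0, …, w_{r-1}`; multiplied
by the Vandermonde product it makes the functional antisymmetric, and `antisymm_expand` extracts
`1 + t + ⋯ + t^r` at each step. -/
lemma iterX_eq [NoZeroDivisors A] [CharZero A] (H : ℤ → A) (D : A →+* Polynomial A) (t : A)
    (hH : ∀ n : ℤ, D (H n) = Polynomial.C (H n)
      - Polynomial.C (1 + t) * Polynomial.X * Polynomial.C (H (n-1))
      + Polynomial.C t * Polynomial.X ^ 2 * Polynomial.C (H (n-2)))
    (ht : D t = Polynomial.C t)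
    (Dm : ℕ → A → MvPolynomial ℕ A) (hD0 : ∀ P, Dm 0 P = C P)
    (hDs : ∀ r P, Dext D r (Dm r P) = Dm (r+1) P)
    (hDswap : ∀ r i P, i + 1 < r → rename (Equiv.swap i (i+1)) (Dm r P) = Dm r P)
    (c : ℤ) (P : A) (r : ℕ) :
    iterX H D c P r = tfact t r * Phi H (c + 2 - 2 * r) r
      ((∏ i ∈ Finset.range r, X i ^ i) * (vdm A r * Dm r P)) := by
  induction r with
  | zero =>
    simp only [iterX, tfact, Finset.range_zero, Finset.prod_empty, one_mul, vdm, hD0]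
    rw [← MvPolynomial.monomial_zero', Phi_monomial]
    simp
  | succ r ih =>
    have hfac : D (tfact t r) = Polynomial.C (tfact t r) := by
      simp only [tfact, map_prod, map_sum, map_pow, ht]
    rw [iterX, ih, map_mul, hfac, phi1_C_mul,
      show c + 2 - 2 * (r : ℤ) = (c - 2 * r) + 2 by ring, step H D t hH,
      show c + 2 - 2 * ((r + 1 : ℕ) : ℤ) = c - 2 * r by push_cast; ring]
    have e1 : Dext D r (∏ i ∈ Finset.range r, X i ^ i) = ∏ i ∈ Finset.range r, X i ^ i := by
      rw [map_prod]
      refine Finset.prod_congr rfl fun i hi => ?_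
      rw [map_pow, Dext_X D r i (by simpa using hi)]
    have e2 : Dext D r (vdm A r) = vdm A r := by
      rw [vdm, map_prod]
      refine Finset.prod_congr rfl fun j hj => ?_
      rw [map_prod]
      refine Finset.prod_congr rfl fun i hi => ?_
      simp only [Finset.mem_range] at hi hj
      rw [map_sub, Dext_X D r i (by omega), Dext_X D r j hj]
    rw [map_mul (Dext D r), map_mul (Dext D r), e1, e2, hDs]
    -- the antisymmetric functional to which the expansion lemma applies
    let L : MvPolynomial ℕ A →ₗ[A] A :=
      (Phi H (c - 2 * r) (r+1)).comp (LinearMap.mulRight A (vdm A (r+1) * Dm (r+1) P))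
    have hL : ∀ f, L f = Phi H (c - 2 * r) (r+1) (f * (vdm A (r+1) * Dm (r+1) P)) :=
      fun f => rfl
    have hanti : ∀ i < r, ∀ f, L (rename (Equiv.swap i (i+1)) f) = - L f := by
      intro i hi f
      rw [hL, hL, ← Phi_rename H _ i (r+1) (by omega) (f * _), map_mul (rename _), map_mul (rename _),
        rename_vdm i (r+1) (by omega), hDswap (r+1) i P (by omega), ← map_neg]
      congr 1
      ring
    have h := antisymm_expand L r t hanti
    have htf : tfact t (r+1) = tfact t r * ∑ j ∈ Finset.range (r+1), t ^ j :=
      Finset.prod_range_succ _ _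
    rw [htf, ← hL, mul_assoc]
    congr 1
    have e3 : vdm A (r+1) = vdm A r * ((-1) ^ r * ∏ i ∈ Finset.range r, (X i - X r)) := by
      rw [vdm, Finset.prod_range_succ, ← vdm]
      congr 1
      rw [← Finset.card_range r, ← Finset.prod_const, Finset.card_range, ← Finset.prod_mul_distrib]
      exact Finset.prod_congr rfl fun i _ => by ring
    have e4 : (∏ i ∈ Finset.range r, (X i - X r) * (X i - C t * X r)) *
        ((∏ i ∈ Finset.range r, X i ^ i) * (vdm A r * Dm (r + 1) P))
        = (C ((-1) ^ r) * ∏ i ∈ Finset.range r, ((X i - C t * X r) * X i ^ i)) *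
          (vdm A (r+1) * Dm (r+1) P) := by
      rw [e3, Finset.prod_mul_distrib, Finset.prod_mul_distrib, C_pow, C_neg, C_1]
      have : ((-1) ^ r * (-1) ^ r : MvPolynomial ℕ A) = 1 := by
        rw [← mul_pow]; simp
      linear_combination (-(∏ i ∈ Finset.range r, (X i - X r)) * (∏ i ∈ Finset.range r, (X i - C t * X r)) *
        (∏ i ∈ Finset.range r, X i ^ i) * vdm A r * Dm (r + 1) P) * this
    rw [e4, mul_assoc, Phi_C_mul, ← hL, h, ← mul_assoc, ← mul_assoc, ← mul_pow]
    simp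

end VertexStep

/-! ### Generating functions and power-sum substitutions -/

section GeneratingFunctions

variable {B : Type*} [CommRing B]

/-- In characteristic zero a power series is determined by its logarithmic derivative and its
constant term; every identity between exponentials below is deduced from this. -/
lemma powerSeries_ode_unique [NoZeroDivisors B] [CharZero B] (b F G : PowerSeries B)
    (hF : PowerSeries.derivative _ F = b * F) (hG : PowerSeries.derivative _ G = b * G)
    (h0 : PowerSeries.coeff 0 F = PowerSeries.coeff 0 G) : F = G := by
  ext n
  induction n using Nat.strong_induction_on with
  | _ n ih =>
    rcases n with _ | n
    · exact h0
    · have h1 := congrArg (PowerSeries.coeff n) hF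
      have h2 := congrArg (PowerSeries.coeff n) hG
      rw [PowerSeries.coeff_derivative, PowerSeries.coeff_mul] at h1 h2
      rw [Finset.sum_congr rfl (fun p hp => by
        rw [ih p.2 (by have := Finset.HasAntidiagonal.mem_antidiagonal.mp hp; omega)]), ← h2] at h1
      exact mul_right_cancel₀ (by exact_mod_cast Nat.succ_ne_zero n) h1

lemma ode_mul (b c F G : PowerSeries B) (hF : PowerSeries.derivative _ F = b * F)
    (hG : PowerSeries.derivative _ G = c * G) :
    PowerSeries.derivative _ (F * G) = (b + c) * (F * G) := by
  rw [Derivation.leibniz, hF, hG, smul_eq_mul, smul_eq_mul]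
  ring

/-- The linear factor `1 - a z`. -/
def linF (a : B) : PowerSeries B := 1 - PowerSeries.C a * PowerSeries.X

lemma ode_linF (a : B) :
    PowerSeries.derivative _ (linF a) = (PowerSeries.mk fun n => -a ^ (n+1)) * linF a := by
  have h : (PowerSeries.mk fun n => -a ^ (n+1)) * linF a = - PowerSeries.C a := by
    ext n
    rw [linF, mul_sub, mul_one, mul_left_comm, map_sub, PowerSeries.coeff_C_mul]
    rcases n with _ | n
    · simp
    · rw [PowerSeries.coeff_succ_mul_X]
      simp [pow_succ']
  rw [h, linF, map_sub, Derivation.leibniz]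
  simp

lemma coeff_zero_linF (a : B) : PowerSeries.coeff 0 (linF a) = 1 := by
  simp [linF]

lemma coeff_mul_linF_succ (a : B) (F : PowerSeries B) (n : ℕ) :
    PowerSeries.coeff (n+1) (F * linF a)
      = PowerSeries.coeff (n+1) F - a * PowerSeries.coeff n F := by
  rw [linF, mul_sub, mul_one, mul_left_comm, map_sub, PowerSeries.coeff_C_mul,
    PowerSeries.coeff_succ_mul_X]

lemma coeff_mul_linF_zero (a : B) (F : PowerSeries B) :
    PowerSeries.coeff 0 (F * linF a) = PowerSeries.coeff 0 F := by
  simp [linF]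

/-- The generating series of the family `genFamF c`. -/
def genS (c : ℕ → Fq) : PowerSeries LamF := PowerSeries.mk (genFamF c)

lemma coeff_genS (c : ℕ → Fq) (n : ℕ) : PowerSeries.coeff n (genS c) = genFamF c n :=
  PowerSeries.coeff_mk _ _

lemma genFamF_zero (c : ℕ → Fq) : genFamF c 0 = 1 := by rw [genFamF]

lemma genFamF_succ (c : ℕ → Fq) (k : ℕ) : ((k : Fq) + 1) • genFamF c (k+1) =
    ∑ i ∈ Finset.range (k+1), c (i+1) • (ppF ⟨i+1, Nat.succ_pos i⟩ * genFamF c (k - i)) := by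
  have h : (k : Fq) + 1 ≠ 0 := by exact_mod_cast Nat.succ_ne_zero k
  rw [genFamF, smul_inv_smul₀ h]

/-- The logarithmic derivative `∑ c_{n+1} p_{n+1} z^n` of `genS c`. -/
def logD (c : ℕ → Fq) : PowerSeries LamF :=
  PowerSeries.mk fun n => c (n+1) • ppF ⟨n+1, Nat.succ_pos n⟩

lemma ode_genS (c : ℕ → Fq) : PowerSeries.derivative _ (genS c) = logD c * genS c := by
  ext1 n
  rw [PowerSeries.coeff_derivative, PowerSeries.coeff_mul,
    Finset.Nat.sum_antidiagonal_eq_sum_range_succ_mk, coeff_genS]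
  have h := genFamF_succ c n
  rw [Algebra.smul_def, map_add, map_natCast, map_one, mul_comm] at h
  rw [h]
  refine Finset.sum_congr rfl fun i _ => ?_
  rw [coeff_genS, logD, PowerSeries.coeff_mk, smul_mul_assoc]

lemma genS_mul (c c' c'' : ℕ → Fq) (h : ∀ n, c (n+1) + c' (n+1) = c'' (n+1)) :
    genS c * genS c' = genS c'' := by
  refine powerSeries_ode_unique (logD c'') _ _ ?_ (ode_genS _) ?_
  · rw [ode_mul _ _ _ _ (ode_genS c) (ode_genS c')]
    congr 1
    ext1 n
    simp only [logD, map_add, PowerSeries.coeff_mk, ← add_smul, h]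
  · simp [coeff_genS, genFamF_zero, PowerSeries.coeff_mul]

lemma genS_zero (c : ℕ → Fq) (h : ∀ n, c (n+1) = 0) : genS c = 1 := by
  refine powerSeries_ode_unique (logD c) _ _ (ode_genS _) ?_ ?_
  · have : logD c = 0 := by ext1 n; simp [logD, h]
    rw [this, zero_mul]
    simp
  · simp [coeff_genS, genFamF_zero]

/-- Homogeneity: replacing `p_n` by `a^n p_n` scales the degree `n` term by `a^n`. -/
lemma genFamF_scale (c : ℕ → Fq) (a : Fq) (n : ℕ) :
    genFamF (fun n => a ^ n * c n) n = a ^ n • genFamF c n := by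
  induction n using Nat.strong_induction_on with
  | _ n ih =>
    rcases n with _ | n
    · simp [genFamF_zero]
    · have h : (n : Fq) + 1 ≠ 0 := by exact_mod_cast Nat.succ_ne_zero n
      refine (smul_right_injective LamF h) ?_
      simp only
      rw [genFamF_succ, smul_comm, genFamF_succ, Finset.smul_sum]
      refine Finset.sum_congr rfl fun i hi => ?_
      rw [ih (n - i) (by omega), mul_smul_comm, smul_smul, smul_smul]
      congr 1
      have : n + 1 = (i + 1) + (n - i) := by simp only [Finset.mem_range] at hi; omega
      rw [this, pow_add]
      ring

/-- The substitution `p_n ↦ p_n + d_n w^n` with values in polynomials in one variable `w`. -/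
def Dsub (d : ℕ → Fq) : LamF →ₐ[Fq] Polynomial LamF :=
  aeval fun n : ℕ+ => Polynomial.C (X n) + Polynomial.C (C (d n)) * Polynomial.X ^ (n : ℕ)

/-- The substitution `p_n ↦ p_n + d_n (w_0^n + ⋯ + w_{r-1}^n)`. -/
def Dmul (d : ℕ → Fq) (r : ℕ) : LamF →ₐ[Fq] MvPolynomial ℕ LamF :=
  aeval fun n : ℕ+ => C (X n) + C (C (d n)) * ∑ i ∈ Finset.range r, X i ^ (n : ℕ)

lemma Dsub_X (d : ℕ → Fq) (n : ℕ+) :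
    Dsub d (X n) = Polynomial.C (X n) + Polynomial.C (C (d n)) * Polynomial.X ^ (n : ℕ) := by
  simp [Dsub]

lemma Dsub_C (d : ℕ → Fq) (a : Fq) : Dsub d (C a) = Polynomial.C (C a) := by
  simp [Dsub, Polynomial.algebraMap_eq, IsScalarTower.algebraMap_apply Fq LamF (Polynomial LamF)]

lemma Dmul_X (d : ℕ → Fq) (r : ℕ) (n : ℕ+) :
    Dmul d r (X n) = C (X n) + C (C (d n)) * ∑ i ∈ Finset.range r, X i ^ (n : ℕ) := by
  simp [Dmul]

lemma Dmul_C (d : ℕ → Fq) (r : ℕ) (a : Fq) : Dmul d r (C a) = C (C a) := by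
  simp [Dmul, MvPolynomial.algebraMap_eq,
    IsScalarTower.algebraMap_apply Fq LamF (MvPolynomial ℕ LamF)]

lemma Dmul_zero (d : ℕ → Fq) (P : LamF) : Dmul d 0 P = C P := by
  have : ((Dmul d 0 : LamF →ₐ[Fq] MvPolynomial ℕ LamF) : LamF →+* MvPolynomial ℕ LamF) = C := by
    refine MvPolynomial.ringHom_ext (fun a => ?_) (fun n => ?_)
    · exact Dmul_C d 0 a
    · exact (Dmul_X d 0 n).trans (by simp)
  exact congrArg (fun f => f P) this

lemma Dext_Dmul (d : ℕ → Fq) (r : ℕ) (P : LamF) :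
    Dext (Dsub d : LamF →+* Polynomial LamF) r (Dmul d r P) = Dmul d (r+1) P := by
  have : (Dext (Dsub d : LamF →+* Polynomial LamF) r).comp (Dmul d r : LamF →+* MvPolynomial ℕ LamF)
      = (Dmul d (r+1) : LamF →+* MvPolynomial ℕ LamF) := by
    refine MvPolynomial.ringHom_ext (fun a => ?_) (fun n => ?_)
    · rw [RingHom.comp_apply]
      simp only [RingHom.coe_coe, Dmul_C, Dext_C, Dsub_C, Polynomial.aeval_C,
        MvPolynomial.algebraMap_eq]
    · rw [RingHom.comp_apply]
      simp only [RingHom.coe_coe, Dmul_X, map_add, map_mul, map_sum, map_pow, Dext_C, Dsub_C,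
        Dsub_X, Polynomial.aeval_C, Polynomial.aeval_X, MvPolynomial.algebraMap_eq]
      rw [Finset.sum_range_succ, Finset.sum_congr rfl (fun i hi => by
        rw [Dext_X _ r i (by simpa using hi)])]
      ring
  exact congrArg (fun f => f P) this

lemma rename_Dmul (d : ℕ → Fq) (r i : ℕ) (P : LamF) (h : i + 1 < r) :
    rename (Equiv.swap i (i+1)) (Dmul d r P) = Dmul d r P := by
  have : ((rename (R := LamF) (Equiv.swap i (i+1)) : MvPolynomial ℕ LamF →ₐ[LamF] _) :
        MvPolynomial ℕ LamF →+* MvPolynomial ℕ LamF).comp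
        (Dmul d r : LamF →+* MvPolynomial ℕ LamF)
      = (Dmul d r : LamF →+* MvPolynomial ℕ LamF) := by
    refine MvPolynomial.ringHom_ext (fun a => ?_) (fun n => ?_)
    · rw [RingHom.comp_apply]
      simp only [RingHom.coe_coe, Dmul_C, rename_C]
    · rw [RingHom.comp_apply]
      simp only [RingHom.coe_coe, Dmul_X, map_add, map_mul, map_sum, map_pow, rename_C, rename_X]
      congr 2
      refine Finset.sum_equiv (Equiv.swap i (i+1)) (fun a => ?_) (fun _ _ => rfl)
      simp only [Finset.mem_range, Equiv.swap_apply_def]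
      split_ifs <;> omega
  exact congrArg (fun f => f P) this

lemma derivative_map' {S T : Type*} [CommRing S] [CommRing T] (f : S →+* T) (F : PowerSeries S) :
    PowerSeries.derivative _ (PowerSeries.map f F)
      = PowerSeries.map f (PowerSeries.derivative _ F) := by
  ext n
  simp [PowerSeries.coeff_derivative]

/-- The image of the generating series under a substitution, described through its logarithmic
derivative. -/
lemma ode_map_Dsub (c d : ℕ → Fq) :
    PowerSeries.derivative _ (PowerSeries.map (Dsub d : LamF →+* Polynomial LamF) (genS c))
      = (PowerSeries.map Polynomial.C (logD c) +
          PowerSeries.mk fun n => Polynomial.C (C (c (n+1) * d (n+1))) * Polynomial.X ^ (n+1)) *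
        PowerSeries.map (Dsub d : LamF →+* Polynomial LamF) (genS c) := by
  rw [derivative_map', ode_genS, map_mul]
  congr 1
  ext1 n
  simp only [PowerSeries.coeff_map, map_add, logD, PowerSeries.coeff_mk, ppF,
    MvPolynomial.smul_eq_C_mul, map_mul, RingHom.coe_coe, Dsub_C]
  have hX := Dsub_X d ⟨n+1, Nat.succ_pos n⟩
  rw [PNat.mk_coe] at hX
  rw [hX]
  ring

lemma ode_map_C (c : ℕ → Fq) :
    PowerSeries.derivative _ (PowerSeries.map (Polynomial.C : LamF →+* Polynomial LamF) (genS c))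
      = PowerSeries.map Polynomial.C (logD c) * PowerSeries.map Polynomial.C (genS c) := by
  rw [derivative_map', ode_genS, map_mul]

/-- The contraction of the vertex operators `X^±`: if the coefficients satisfy
`c_n d_n = -(1 + t^n)`, then `D(H(z)) = H(z)(1 - w z)(1 - t w z)`. -/
lemma map_Dsub_two (c d : ℕ → Fq) (t : Fq) (h : ∀ n, c (n+1) * d (n+1) = -(1 + t ^ (n+1))) :
    PowerSeries.map (Dsub d : LamF →+* Polynomial LamF) (genS c)
      = PowerSeries.map Polynomial.C (genS c) * linF Polynomial.X *
        linF (Polynomial.C (C t) * Polynomial.X) := by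
  refine powerSeries_ode_unique _ _ _ (ode_map_Dsub c d) ?_ ?_
  · rw [ode_mul _ _ _ _ (ode_mul _ _ _ _ (ode_map_C c) (ode_linF _)) (ode_linF _)]
    congr 1
    rw [add_assoc]
    congr 1
    ext1 n
    simp only [PowerSeries.coeff_mk, map_add, h, map_neg, map_one, map_pow]
    ring
  · rw [coeff_mul_linF_zero, coeff_mul_linF_zero]
    simp only [PowerSeries.coeff_map, coeff_genS, genFamF_zero, map_one]

/-- A contraction with a single factor: `D(H(z)) = H(z)(1 - a w z)`. -/
lemma map_Dsub_one (c d : ℕ → Fq) (a : Fq) (h : ∀ n, c (n+1) * d (n+1) = - a ^ (n+1)) :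
    PowerSeries.map (Dsub d : LamF →+* Polynomial LamF) (genS c)
      = PowerSeries.map Polynomial.C (genS c) * linF (Polynomial.C (C a) * Polynomial.X) := by
  refine powerSeries_ode_unique _ _ _ (ode_map_Dsub c d) ?_ ?_
  · rw [ode_mul _ _ _ _ (ode_map_C c) (ode_linF _)]
    congr 2
    ext1 n
    simp only [PowerSeries.coeff_mk, h, map_neg, map_pow]
    ring
  · rw [coeff_mul_linF_zero]
    simp only [PowerSeries.coeff_map, coeff_genS, genFamF_zero, map_one]

/-- A contraction with a pole: `D(H(z)) = H(z)/(1 - w z)`. -/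
lemma map_Dsub_inv (c d : ℕ → Fq) (h : ∀ n, c (n+1) * d (n+1) = 1) :
    PowerSeries.map (Dsub d : LamF →+* Polynomial LamF) (genS c) * linF Polynomial.X
      = PowerSeries.map Polynomial.C (genS c) := by
  refine powerSeries_ode_unique _ _ _ ?_ (ode_map_C c) ?_
  · rw [ode_mul _ _ _ _ (ode_map_Dsub c d) (ode_linF _)]
    congr 1
    rw [add_assoc, add_eq_left]
    ext1 n
    simp only [PowerSeries.coeff_mk, map_add, h, map_one, map_zero]
    ring
  · rw [coeff_mul_linF_zero]
    simp only [PowerSeries.coeff_map, coeff_genS, genFamF_zero, map_one]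

/-- The family `genFamF c` indexed by `ℤ`, zero in negative degrees. -/
def genZ (c : ℕ → Fq) (n : ℤ) : LamF := if 0 ≤ n then genFamF c n.toNat else 0

lemma genZ_natCast (c : ℕ → Fq) (n : ℕ) : genZ c n = genFamF c n := by simp [genZ]

lemma genZ_neg (c : ℕ → Fq) (n : ℤ) (h : n < 0) : genZ c n = 0 := by
  rw [genZ, if_neg (by omega)]

/-- The contraction `map_Dsub_two`, read off coefficientwise; this is the hypothesis of `iterX_eq`. -/
lemma Dsub_genZ (c d : ℕ → Fq) (t : Fq) (h : ∀ n, c (n+1) * d (n+1) = -(1 + t ^ (n+1))) (n : ℤ) :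
    (Dsub d : LamF →+* Polynomial LamF) (genZ c n) = Polynomial.C (genZ c n)
      - Polynomial.C (1 + C t) * Polynomial.X * Polynomial.C (genZ c (n-1))
      + Polynomial.C (C t) * Polynomial.X ^ 2 * Polynomial.C (genZ c (n-2)) := by
  have key := map_Dsub_two c d t h
  rcases lt_or_ge n 0 with hn | hn
  · rw [genZ_neg c n hn, genZ_neg c _ (by omega), genZ_neg c _ (by omega)]
    simp
  · obtain ⟨m, rfl⟩ := Int.eq_ofNat_of_zero_le hn
    have hk := congrArg (PowerSeries.coeff m) key
    rw [PowerSeries.coeff_map, coeff_genS] at hk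
    rcases m with _ | _ | m
    · rw [coeff_mul_linF_zero, coeff_mul_linF_zero, PowerSeries.coeff_map, coeff_genS] at hk
      rw [genZ_natCast, hk, genZ_neg c _ (by simp), genZ_neg c _ (by simp)]
      simp
    · rw [coeff_mul_linF_succ, coeff_mul_linF_succ, coeff_mul_linF_zero, PowerSeries.coeff_map,
        PowerSeries.coeff_map, coeff_genS, coeff_genS] at hk
      rw [genZ_natCast, hk, genZ_neg c (((0 + 1 : ℕ) : ℤ) - 2) (by simp),
        show ((0 + 1 : ℕ) : ℤ) - 1 = (0 : ℕ) by simp, genZ_natCast]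
      simp only [map_add, map_one, map_zero, mul_zero]
      ring
    · rw [coeff_mul_linF_succ, coeff_mul_linF_succ, coeff_mul_linF_succ, PowerSeries.coeff_map,
        PowerSeries.coeff_map, PowerSeries.coeff_map, coeff_genS, coeff_genS, coeff_genS] at hk
      rw [genZ_natCast, hk, show ((m + 1 + 1 : ℕ) : ℤ) - 2 = (m : ℕ) by push_cast; ring,
        show ((m + 1 + 1 : ℕ) : ℤ) - 1 = (m + 1 : ℕ) by push_cast; ring, genZ_natCast,
        genZ_natCast]
      simp only [map_add, map_one]
      ring

end GeneratingFunctions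

/-! ### Taylor's formula for the annihilation part -/

section Taylor

/-- The operator `n·∂/∂p_n`. -/
def dOp (n : ℕ+) : Module.End Fq LamF := ((n : ℕ) : Fq) • (pderiv n).toLinearMap

lemma dOp_apply (n : ℕ+) (P : LamF) : dOp n P = ((n : ℕ) : Fq) • pderiv n P := rfl

lemma pderiv_comm' (i j : ℕ+) (P : LamF) :
    (pderiv i (pderiv j P) : LamF) = pderiv j (pderiv i P) := by
  have h : ⁅(pderiv i : Derivation Fq LamF LamF), (pderiv j : Derivation Fq LamF LamF)⁆ = 0 := by
    refine MvPolynomial.derivation_ext fun k => ?_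
    rw [Derivation.commutator_apply, pderiv_X, pderiv_X]
    by_cases hi : i = k <;> by_cases hj : j = k <;> simp [hi, hj]
  have := congrArg (fun D : Derivation Fq LamF LamF => D P) h
  simp only [Derivation.commutator_apply, Derivation.zero_apply] at this
  exact sub_eq_zero.mp this

lemma dOp_comm : ∀ a ∈ Set.range dOp, ∀ b ∈ Set.range dOp, a * b = b * a := by
  rintro _ ⟨i, rfl⟩ _ ⟨j, rfl⟩
  refine LinearMap.ext fun P => ?_
  rw [Module.End.mul_apply, Module.End.mul_apply, dOp_apply, dOp_apply, dOp_apply, dOp_apply,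
    Derivation.map_smul, Derivation.map_smul, pderiv_comm', smul_comm]

/-- The operators `n·∂/∂p_n` generate a commutative algebra. -/
abbrev opCommSemiring : CommSemiring (Algebra.adjoin Fq (Set.range dOp)) :=
  { (Algebra.adjoin Fq (Set.range dOp)).toSemiring with
    mul_comm := (Algebra.isMulCommutative_adjoin Fq dOp_comm).is_comm.comm }

/-- The algebra homomorphism `f ↦ f(∂)`, into the commutative algebra generated by the
operators `n·∂/∂p_n`. -/
def opHom : LamF →ₐ[Fq] Algebra.adjoin Fq (Set.range dOp) :=
  letI := opCommSemiring
  aeval (S₁ := Algebra.adjoin Fq (Set.range dOp)) fun n => ⟨dOp n, Algebra.subset_adjoin ⟨n, rfl⟩⟩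

lemma opHom_monomial (α : ℕ+ →₀ ℕ) (a : Fq) :
    (opHom (monomial α a) : Module.End Fq LamF) = a • monOpF α := by
  let _ := opCommSemiring
  rw [opHom, aeval_monomial, Finsupp.prod, Finset.prod, ← Finset.sort_eq α.support (· ≤ ·),
    Multiset.map_coe, Multiset.prod_coe, ← Algebra.smul_def, Subalgebra.coe_smul,
    ← Subalgebra.val_apply, map_list_prod, List.map_map]
  rfl

lemma DopF_eq (f P : LamF) : DopF f P = (opHom f : Module.End Fq LamF) P := by
  conv_rhs => rw [f.as_sum]
  rw [map_sum, ← Subalgebra.val_apply, map_sum, LinearMap.sum_apply]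
  refine Finset.sum_congr rfl fun α _ => ?_
  rw [Subalgebra.val_apply, opHom_monomial]
  rfl

lemma opHom_X (n : ℕ+) : (opHom (X n) : Module.End Fq LamF) = dOp n := by
  simp [opHom]

lemma DopF_smul (a : Fq) (f P : LamF) : DopF (a • f) P = a • DopF f P := by
  rw [DopF_eq, DopF_eq, map_smul, Subalgebra.coe_smul, LinearMap.smul_apply]

lemma DopF_X_mul (n : ℕ+) (f P : LamF) :
    DopF (X n * f) P = ((n : ℕ) : Fq) • DopF f (pderiv n P) := by
  rw [DopF_eq, DopF_eq, mul_comm, map_mul, Subalgebra.coe_mul, Module.End.mul_apply, opHom_X,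
    dOp_apply, map_smul]

lemma DopF_sum {ι : Type*} (s : Finset ι) (f : ι → LamF) (P : LamF) :
    DopF (∑ i ∈ s, f i) P = ∑ i ∈ s, DopF (f i) P := by
  simp only [DopF_eq]
  rw [map_sum, ← Subalgebra.val_apply, map_sum, LinearMap.sum_apply]
  rfl

lemma DopF_genFamF_zero (d : ℕ → Fq) (P : LamF) : DopF (genFamF d 0) P = P := by
  rw [DopF_eq, genFamF_zero, map_one]
  rfl

lemma DopF_genFamF_succ (d : ℕ → Fq) (k : ℕ) (P : LamF) :
    ((k : Fq) + 1) • DopF (genFamF d (k+1)) P = ∑ i ∈ Finset.range (k+1),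
      (((i : Fq) + 1) * d (i+1)) •
        DopF (genFamF d (k - i)) (pderiv (Nat.succPNat i) P) := by
  rw [← DopF_smul, genFamF_succ, DopF_sum]
  refine Finset.sum_congr rfl fun i _ => ?_
  rw [DopF_smul, show (ppF ⟨i+1, Nat.succ_pos i⟩ : LamF) = X (Nat.succPNat i) from rfl, DopF_X_mul,
    smul_smul, Nat.succPNat_coe, mul_comm, Nat.cast_succ]

/-- The truncated chain-rule expression for the `w`-derivative of `Dsub d P`. -/
def chainS (d : ℕ → Fq) (N : ℕ) (P : LamF) : Polynomial LamF :=
  ∑ i ∈ Finset.range N, Polynomial.C (C (((i : Fq) + 1) * d (i+1))) * Polynomial.X ^ i *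
    Dsub d (pderiv (Nat.succPNat i) P)

lemma chainS_add (d : ℕ → Fq) (N : ℕ) (P Q : LamF) :
    chainS d N (P + Q) = chainS d N P + chainS d N Q := by
  simp only [chainS, map_add, mul_add, Finset.sum_add_distrib]

lemma chainS_mul (d : ℕ → Fq) (N : ℕ) (P Q : LamF) :
    chainS d N (P * Q) = chainS d N P * Dsub d Q + Dsub d P * chainS d N Q := by
  simp only [chainS, pderiv_mul, map_add, map_mul, Finset.sum_mul, Finset.mul_sum,
    ← Finset.sum_add_distrib]
  exact Finset.sum_congr rfl fun i _ => by ring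

lemma chainS_X (d : ℕ → Fq) (N : ℕ) (n : ℕ+) (h : (n : ℕ) ≤ N) :
    chainS d N (X n) = Polynomial.C (C ((n : ℕ) * d n)) * Polynomial.X ^ ((n : ℕ) - 1) := by
  have hn : 0 < (n : ℕ) := n.pos
  rw [chainS, Finset.sum_eq_single ((n : ℕ) - 1)]
  · have e : (Nat.succPNat ((n : ℕ) - 1)) = n := by
      apply PNat.eq
      rw [Nat.succPNat_coe]
      omega
    rw [e, pderiv_X_self, map_one, mul_one, ← Nat.cast_succ, Nat.succ_eq_add_one,
      Nat.sub_add_cancel hn]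
  · intro i _ hi
    rw [pderiv_X_of_ne, map_zero, mul_zero]
    rintro rfl
    exact hi (by simp)
  · intro hh
    simp only [Finset.mem_range] at hh
    omega

/-- Chain rule. Only finitely many `∂P/∂p_n` are nonzero, so every sufficiently long truncation
`chainS d N P` is the full sum. -/
lemma derivative_Dsub (d : ℕ → Fq) (P : LamF) :
    ∃ N₀, ∀ N ≥ N₀, Polynomial.derivative (Dsub d P) = chainS d N P := by
  induction P using MvPolynomial.induction_on with
  | C a => exact ⟨0, fun N _ => by simp [chainS]⟩
  | add P Q hP hQ =>
    obtain ⟨N, hN⟩ := hP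
    obtain ⟨M, hM⟩ := hQ
    refine ⟨max N M, fun K hK => ?_⟩
    rw [map_add, map_add, chainS_add, hN K (by omega), hM K (by omega)]
  | mul_X P n hP =>
    obtain ⟨N, hN⟩ := hP
    refine ⟨max N n, fun K hK => ?_⟩
    rw [map_mul, Polynomial.derivative_mul, chainS_mul, hN K (by omega), chainS_X d K n (by omega),
      Dsub_X]
    congr 2
    simp only [map_add, Polynomial.derivative_C, zero_add, Polynomial.derivative_C_mul,
      Polynomial.derivative_X_pow, map_mul, map_natCast]
    ring

lemma coeff_chainS (d : ℕ → Fq) (N k : ℕ) (h : k < N) (P : LamF) :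
    (chainS d N P).coeff k = ∑ i ∈ Finset.range (k+1), (((i : Fq) + 1) * d (i+1)) •
      (Dsub d (pderiv (Nat.succPNat i) P)).coeff (k - i) := by
  rw [chainS, Polynomial.finsetSum_coeff]
  symm
  refine Finset.sum_subset_zero_on_sdiff ?_ ?_ ?_
  · intro i; simp only [Finset.mem_range]; omega
  · intro i hi
    simp only [Finset.mem_range, Finset.mem_sdiff] at hi
    rw [mul_assoc, Polynomial.coeff_C_mul, Polynomial.coeff_X_pow_mul', if_neg (by omega), mul_zero]
  · intro i hi
    simp only [Finset.mem_range] at hi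
    rw [mul_assoc, Polynomial.coeff_C_mul, Polynomial.coeff_X_pow_mul', if_pos (by omega),
      MvPolynomial.smul_eq_C_mul]

lemma coeff_zero_Dsub (d : ℕ → Fq) (P : LamF) : (Dsub d P).coeff 0 = P := by
  have : (Polynomial.constantCoeff).comp (Dsub d : LamF →+* Polynomial LamF) = RingHom.id LamF := by
    refine MvPolynomial.ringHom_ext (fun a => ?_) (fun n => ?_)
    · simp
    · have := n.pos.ne
      simp [Dsub_X, this]
  exact congrArg (fun f => f P) this

/-- Taylor's formula: the coefficient of `w^j` in `P(p_n + d_n w^n)` is the differential operator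
with generating series `exp (∑ d_n w^n ∂/∂p_n)` applied to `P`. -/
lemma DopF_genFamF (d : ℕ → Fq) (j : ℕ) :
    ∀ P : LamF, DopF (genFamF d j) P = (Dsub d P).coeff j := by
  induction j using Nat.strong_induction_on with
  | _ j ih =>
    intro P
    rcases j with _ | k
    · rw [DopF_genFamF_zero, coeff_zero_Dsub]
    · have h : (k : Fq) + 1 ≠ 0 := by exact_mod_cast Nat.succ_ne_zero k
      refine smul_right_injective LamF h ?_
      obtain ⟨N, hN⟩ := derivative_Dsub d P
      have e := congrArg (fun f => f.coeff k) (hN (max N (k+1)) (by omega))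
      simp only [Polynomial.coeff_derivative] at e
      rw [coeff_chainS _ _ _ (by omega)] at e
      simp only
      rw [DopF_genFamF_succ]
      conv_rhs => rw [MvPolynomial.smul_eq_C_mul, map_add, map_natCast, map_one, mul_comm, e]
      refine Finset.sum_congr rfl fun i _ => ?_
      rw [ih (k - i) (by omega)]

lemma natDegree_Dsub (d : ℕ → Fq) (P : LamF) : (Dsub d P).natDegree ≤ wboundF P := by
  conv_lhs => rw [P.as_sum]
  rw [map_sum]
  refine Polynomial.natDegree_sum_le_of_forall_le _ _ fun α hα => ?_
  refine le_trans ?_ (Finset.le_sup (f := fun α : ℕ+ →₀ ℕ => α.sum fun i k => (i : ℕ) * k) hα)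
  rw [monomial_eq, map_mul, Dsub_C]
  refine (Polynomial.natDegree_C_mul_le _ _).trans ?_
  rw [Finsupp.prod, map_prod]
  refine (Polynomial.natDegree_prod_le _ _).trans ?_
  rw [Finsupp.sum]
  refine Finset.sum_le_sum fun i _ => ?_
  rw [map_pow, Dsub_X, mul_comm (i : ℕ)]
  refine Polynomial.natDegree_pow_le.trans (Nat.mul_le_mul_left _ ?_)
  refine (Polynomial.natDegree_add_le _ _).trans ?_
  rw [Polynomial.natDegree_C]
  refine max_le (Nat.zero_le _) ?_
  exact Polynomial.natDegree_C_mul_X_pow_le (C (d i) : LamF) _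

/-- The vertex operator component written through the substitution `Dsub d`. -/
lemma sum_DopF_eq_phi1 (H : ℤ → LamF) (d : ℕ → Fq) (c : ℤ) (P : LamF) :
    ∑ j ∈ Finset.range (wboundF P + 1), H (c + j) * DopF (genFamF d j) P
      = phi1 H c (Dsub d P) := by
  conv_rhs => rw [Polynomial.as_sum_range' (Dsub d P) (wboundF P + 1)
    (Nat.lt_succ_of_le (natDegree_Dsub d P)), map_sum]
  refine Finset.sum_congr rfl fun j _ => ?_
  rw [phi1_monomial, DopF_genFamF, mul_comm]

end Taylor

/-! ### The integral form of the ring of symmetric functions -/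

section Integrality

/-- A power series quotient has coefficients in a subring when numerator and (unipotent)
denominator do. -/
lemma coeff_mem_of_mul {B : Type*} [CommRing B] (R : Subring B) (F G K : PowerSeries B)
    (h : F * G = K) (h0 : PowerSeries.coeff 0 G = 1) (hG : ∀ n, PowerSeries.coeff n G ∈ R)
    (hK : ∀ n, PowerSeries.coeff n K ∈ R) (n : ℕ) : PowerSeries.coeff n F ∈ R := by
  induction n using Nat.strong_induction_on with
  | _ n ih =>
    have h1 := congrArg (PowerSeries.coeff n) h
    rw [PowerSeries.coeff_mul, Finset.Nat.sum_antidiagonal_eq_sum_range_succ_mk,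
      Finset.sum_range_succ, Nat.sub_self, h0, mul_one] at h1
    rw [← eq_sub_iff_add_eq'] at h1
    rw [h1]
    refine R.sub_mem (hK n) (R.sum_mem fun i hi => ?_)
    exact R.mul_mem (ih i (by simpa using hi)) (hG _)

lemma coeff_mul_mem {B : Type*} [CommRing B] (R : Subring B) (F G : PowerSeries B)
    (hF : ∀ n, PowerSeries.coeff n F ∈ R) (hG : ∀ n, PowerSeries.coeff n G ∈ R) (n : ℕ) :
    PowerSeries.coeff n (F * G) ∈ R := by
  rw [PowerSeries.coeff_mul]
  exact R.sum_mem fun p _ => R.mul_mem (hF _) (hG _)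

/-- The integral form `ℤ[q,q⁻¹][h₁,h₂,…]` of `Λ_F`. -/
def intA : Subring LamF :=
  Subring.closure ({C qq, C qq⁻¹} ∪ Set.range hhF)

lemma qq_ne : qq ≠ 0 := RatFunc.X_ne_zero

lemma C_qq_mem : C qq ∈ intA := Subring.subset_closure (by simp)

lemma C_qq_inv_mem : C qq⁻¹ ∈ intA := Subring.subset_closure (by simp)

lemma hhF_mem (k : ℕ) : hhF k ∈ intA := Subring.subset_closure (by simp)

lemma C_zpow_mem (k : ℤ) : C (qq ^ k) ∈ intA := by
  rcases Int.eq_nat_or_neg k with ⟨n, rfl | rfl⟩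
  · rw [zpow_natCast, C_pow]
    exact intA.pow_mem C_qq_mem n
  · rw [zpow_neg, ← inv_zpow, zpow_natCast, C_pow]
    exact intA.pow_mem C_qq_inv_mem n

lemma genFamF_scale_mem (a : Fq) (ha : C a ∈ intA) (n : ℕ) :
    PowerSeries.coeff n (genS fun n => a ^ n * 1) ∈ intA := by
  rw [coeff_genS, genFamF_scale, MvPolynomial.smul_eq_C_mul, C_pow]
  exact intA.mul_mem (intA.pow_mem ha n) (hhF_mem n)

/-- The generating series of `HpF` is `h(q z) h(q⁻¹ z)`, where `h(z) = ∑ h_k z^k`. -/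
lemma HpF_mem (n : ℕ) : HpF n ∈ intA := by
  have h := genS_mul (fun n => qq ^ n * 1) (fun n => qq⁻¹ ^ n * 1)
    (fun n => (1 + qq ^ (2*n)) * (qq⁻¹) ^ n) (fun n => by
      have h1 : qq ^ (2 * (n + 1)) * qq⁻¹ ^ (n + 1) = qq ^ (n + 1) := by
        rw [two_mul, pow_add, mul_assoc, ← mul_pow, mul_inv_cancel₀ qq_ne, one_pow, mul_one]
      rw [add_mul, h1]
      ring)
  have h2 := coeff_mul_mem intA _ _ (genFamF_scale_mem qq C_qq_mem)
    (genFamF_scale_mem qq⁻¹ C_qq_inv_mem) n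
  rw [h, coeff_genS] at h2
  exact h2

/-- The generating series of `HmF` is the inverse of `h(z) h(q² z)`, where `h(z) = ∑ h_k z^k`. -/
lemma HmF_mem (n : ℕ) : HmF n ∈ intA := by
  have h := genS_mul (fun n => (1 : Fq) ^ n * 1) (fun n => (qq ^ 2) ^ n * 1)
    (fun n => 1 + qq ^ (2*n)) (fun n => by
      rw [pow_mul]; simp)
  have h2 := genS_mul (fun n => -(1 + qq ^ (2*n))) (fun n => 1 + qq ^ (2*n)) (fun _ => 0)
    (fun n => by ring)
  rw [genS_zero (fun _ => 0) (fun _ => rfl), ← h] at h2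
  have h3 := coeff_mem_of_mul intA _ _ _ h2 (by simp [coeff_genS, genFamF_zero, PowerSeries.coeff_mul])
    (coeff_mul_mem intA _ _ (genFamF_scale_mem 1 (by simp))
      (genFamF_scale_mem (qq ^ 2) (by rw [C_pow]; exact intA.pow_mem C_qq_mem 2)))
    (fun n => by
      rw [PowerSeries.coeff_one]
      split_ifs
      exacts [intA.one_mem, intA.zero_mem]) n
  rw [coeff_genS] at h3
  exact h3

lemma HZp_mem (n : ℤ) : HZp n ∈ intA := by
  rw [HZp]
  split_ifs
  exacts [HpF_mem _, intA.zero_mem]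

lemma HZm_mem (n : ℤ) : HZm n ∈ intA := by
  rw [HZm]
  split_ifs
  exacts [HmF_mem _, intA.zero_mem]

/-- Polynomials in `w` with coefficients in `intA`. -/
def intP : Subring (Polynomial LamF) := (Polynomial.mapRingHom intA.subtype).range

lemma C_mem_intP {a : LamF} (ha : a ∈ intA) : Polynomial.C a ∈ intP :=
  ⟨Polynomial.C ⟨a, ha⟩, by simp⟩

lemma X_mem_intP : Polynomial.X ∈ intP := ⟨Polynomial.X, by simp⟩

/-- Polynomials in `w₀, w₁, …` with coefficients in `intA`. -/
def intM : Subring (MvPolynomial ℕ LamF) := (MvPolynomial.map intA.subtype).range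

lemma C_mem_intM {a : LamF} (ha : a ∈ intA) : C a ∈ intM :=
  ⟨C ⟨a, ha⟩, by simp⟩

lemma X_mem_intM (i : ℕ) : X i ∈ intM := ⟨X i, by simp⟩

lemma aeval_mem_intM {f : Polynomial LamF} (hf : f ∈ intP) (i : ℕ) :
    Polynomial.aeval (X i : MvPolynomial ℕ LamF) f ∈ intM := by
  obtain ⟨g, rfl⟩ := hf
  induction g using Polynomial.induction_on' with
  | add p q hp hq => rw [map_add, map_add]; exact intM.add_mem hp hq
  | monomial n a =>
    rw [Polynomial.coe_mapRingHom, Polynomial.map_monomial, Polynomial.aeval_monomial]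
    exact intM.mul_mem (C_mem_intM a.2) (intM.pow_mem (X_mem_intM i) n)

lemma Dext_mem_intM (D : LamF →+* Polynomial LamF) (hD : ∀ P ∈ intA, D P ∈ intP) (r : ℕ)
    {f : MvPolynomial ℕ LamF} (hf : f ∈ intM) : Dext D r f ∈ intM := by
  obtain ⟨g, rfl⟩ := hf
  induction g using MvPolynomial.induction_on with
  | C a =>
    rw [MvPolynomial.map_C, Dext_C]
    exact aeval_mem_intM (hD _ a.2) r
  | add p q hp hq => rw [map_add, map_add]; exact intM.add_mem hp hq
  | mul_X p n hp =>
    rw [map_mul, map_mul, MvPolynomial.map_X]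
    refine intM.mul_mem hp ?_
    rw [Dext, eval₂Hom_X']
    split_ifs
    exacts [X_mem_intM n, intM.one_mem]

/-- The `r`-variable substitution inherits integrality from the one-variable one, since it is built
by adjoining one variable at a time. -/
lemma Dmul_mem_intM (d : ℕ → Fq) (hd : ∀ P ∈ intA, Dsub d P ∈ intP) (r : ℕ) {P : LamF}
    (hP : P ∈ intA) : Dmul d r P ∈ intM := by
  induction r with
  | zero => rw [Dmul_zero]; exact C_mem_intM hP
  | succ r ih => rw [← Dext_Dmul]; exact Dext_mem_intM _ hd r ih

lemma vdm_mem_intM (r : ℕ) : vdm LamF r ∈ intM :=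
  intM.prod_mem fun _ _ => intM.prod_mem fun _ _ => intM.sub_mem (X_mem_intM _) (X_mem_intM _)

lemma Phi_mem_intA (H : ℤ → LamF) (hH : ∀ n, H n ∈ intA) (b : ℤ) (N : ℕ)
    {f : MvPolynomial ℕ LamF} (hf : f ∈ intM) : Phi H b N f ∈ intA := by
  obtain ⟨g, rfl⟩ := hf
  induction g using MvPolynomial.induction_on' with
  | monomial k a =>
    rw [MvPolynomial.map_monomial, Phi_monomial]
    exact intA.mul_mem a.2 (intA.prod_mem fun i _ => hH _)
  | add p q hp hq => rw [map_add, map_add]; exact intA.add_mem hp hq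

/-- It suffices to check integrality of the substitution on the `h_k`. -/
lemma Dsub_mem_intP (d : ℕ → Fq) (h : ∀ k, Dsub d (hhF k) ∈ intP) :
    ∀ P ∈ intA, Dsub d P ∈ intP := by
  intro P hP
  have : intA ≤ intP.comap (Dsub d : LamF →+* Polynomial LamF) := by
    refine Subring.closure_le.mpr ?_
    rintro _ ((rfl | rfl) | ⟨k, rfl⟩)
    · change Dsub d (C qq) ∈ intP
      rw [Dsub_C]; exact C_mem_intP C_qq_mem
    · change Dsub d (C qq⁻¹) ∈ intP
      rw [Dsub_C]; exact C_mem_intP C_qq_inv_mem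
    · exact h k
  exact this hP

lemma coeff_linF_mem (R : Subring (Polynomial LamF)) {a : Polynomial LamF} (ha : a ∈ R) (n : ℕ) :
    PowerSeries.coeff n (linF a) ∈ R := by
  have h := coeff_mul_linF_succ a 1
  rcases n with _ | _ | n
  · rw [coeff_zero_linF]; exact R.one_mem
  · have := h 0
    rw [one_mul] at this
    rw [this]
    simpa [PowerSeries.coeff_one] using ha
  · have := h (n+1)
    rw [one_mul] at this
    rw [this]
    simp [PowerSeries.coeff_one]

lemma coeff_map_C_genS_mem (n : ℕ) :
    PowerSeries.coeff n (PowerSeries.map Polynomial.C (genS fun _ => 1)) ∈ intP := by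
  rw [PowerSeries.coeff_map, coeff_genS]
  exact C_mem_intP (hhF_mem n)

lemma Dsub_p_mem : ∀ P ∈ intA, Dsub (fun n => -((qq⁻¹) ^ n)) P ∈ intP := by
  refine Dsub_mem_intP _ fun k => ?_
  have h := map_Dsub_one (fun _ => 1) (fun n => -((qq⁻¹) ^ n)) qq⁻¹ (fun n => by ring)
  have h2 := congrArg (PowerSeries.coeff k) h
  rw [PowerSeries.coeff_map, coeff_genS] at h2
  have h3 : Dsub (fun n => -((qq⁻¹) ^ n)) (hhF k) = _ := h2
  rw [h3]
  exact coeff_mul_mem intP _ _ coeff_map_C_genS_mem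
    (coeff_linF_mem _ (intP.mul_mem (C_mem_intP C_qq_inv_mem) X_mem_intP)) k

lemma Dsub_m_mem : ∀ P ∈ intA, Dsub (fun _ => 1) P ∈ intP := by
  refine Dsub_mem_intP _ fun k => ?_
  have h := map_Dsub_inv (fun _ => 1) (fun _ => 1) (fun n => by ring)
  have h2 := coeff_mem_of_mul intP _ _ _ h (coeff_zero_linF _) (coeff_linF_mem _ X_mem_intP)
    coeff_map_C_genS_mem k
  rw [PowerSeries.coeff_map, coeff_genS] at h2
  exact h2

end Integrality

/-! ### Schur functions span the integral form -/

section SchurSpan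

/-- The `ℤ`-span of the Schur functions. -/
def schurSpan : AddSubgroup LamF :=
  AddSubgroup.closure {P | ∃ (l : ℕ) (lam : Fin l → ℕ), Antitone lam ∧
    P = schurF fun a => (lam a : ℤ)}

lemma hZF_natCast (n : ℕ) : hZF n = hhF n := by simp [hZF]

/-- Strict rearrangement: a nontrivial permutation of the Jacobi–Trudi indices strictly increases
the sum of squares. -/
lemma sum_sq_lt {l : ℕ} (lam : Fin l → ℤ) (h : Antitone lam) (σ : Equiv.Perm (Fin l))
    (hσ : σ ≠ 1) :
    ∑ i, lam i ^ 2 < ∑ i, (lam (σ i) - ((σ i).1 : ℤ) + (i.1 : ℤ)) ^ 2 := by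
  let ν : Fin l → ℤ := fun i => lam i - (i.1 : ℤ)
  let g : Fin l → ℤ := fun i => (i.1 : ℤ)
  have hν : StrictAnti ν := fun i j hij => by
    have := h hij.le
    have h2 : (i.1 : ℤ) < j.1 := by exact_mod_cast hij
    simp only [ν]
    linarith
  have hg : StrictMono g := fun i j hij => by simpa [g] using hij
  -- the cross terms `∑ ν_{σ(i)} i` are minimal only for the decreasing arrangement of `ν`
  have hanti : Antivary ν g := fun i j hij => (hν (hg.lt_iff_lt.mp hij)).le
  have key : ∑ i, ν i * g i < ∑ i, ν (σ i) * g i := by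
    rw [hanti.sum_mul_lt_sum_comp_perm_mul_iff]
    intro hv
    apply hσ
    have hm : StrictMono σ := by
      refine Monotone.strictMono_of_injective (fun i j hij => ?_) σ.injective
      rcases hij.eq_or_lt with rfl | hij
      · exact le_rfl
      · exact hν.le_iff_ge.mp (hv (hg hij))
    ext1 i
    have := Subsingleton.elim (hm.orderIsoOfSurjective σ σ.surjective) (OrderIso.refl _)
    exact congrArg (fun e : Fin l ≃o Fin l => e i) this
  have e1 : ∑ i, lam i ^ 2 = ∑ i, ν i ^ 2 + 2 * ∑ i, ν i * g i + ∑ i, g i ^ 2 := by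
    rw [Finset.mul_sum, ← Finset.sum_add_distrib, ← Finset.sum_add_distrib]
    exact Finset.sum_congr rfl fun i _ => by simp only [ν, g]; ring
  have e2 : ∑ i, (lam (σ i) - ((σ i).1 : ℤ) + (i.1 : ℤ)) ^ 2
      = ∑ i, ν (σ i) ^ 2 + 2 * ∑ i, ν (σ i) * g i + ∑ i, g i ^ 2 := by
    rw [Finset.mul_sum, ← Finset.sum_add_distrib, ← Finset.sum_add_distrib]
    exact Finset.sum_congr rfl fun i _ => by simp only [ν, g]; ring
  rw [e1, e2, Equiv.sum_comp σ (fun i => ν i ^ 2)]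
  linarith

/-- A product of `h_k`'s is an integral combination of Schur functions: by Jacobi–Trudi, `h_λ`
agrees with `s_λ` up to products whose index tuples have a larger sum of squares. -/
lemma prod_hhF_mem (l M : ℕ) : ∀ lam : Fin l → ℕ,
    (∑ i, lam i) ^ 2 ≤ ∑ i, lam i ^ 2 + M → ∏ i, hhF (lam i) ∈ schurSpan := by
  induction M using Nat.strong_induction_on with
  | _ M ih =>
    intro lam₀ hM₀
    -- sort the tuple into a partition; the product does not change
    obtain ⟨τ, hτ⟩ : ∃ τ : Equiv.Perm (Fin l), Antitone (lam₀ ∘ τ) :=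
      ⟨Tuple.sort (OrderDual.toDual ∘ lam₀), fun i j hij =>
        Tuple.monotone_sort (OrderDual.toDual ∘ lam₀) hij⟩
    set lam := lam₀ ∘ τ with hlam
    have hM : (∑ i, lam i) ^ 2 ≤ ∑ i, lam i ^ 2 + M := by
      have e1 : ∑ i, lam i = ∑ i, lam₀ i := Equiv.sum_comp τ lam₀
      have e2 : ∑ i, lam i ^ 2 = ∑ i, lam₀ i ^ 2 := Equiv.sum_comp τ (fun i => lam₀ i ^ 2)
      rw [e1, e2]; exact hM₀
    rw [← Equiv.prod_comp τ (fun i => hhF (lam₀ i))]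
    change ∏ i, hhF (lam i) ∈ schurSpan
    have hdet : schurF (fun a => (lam a : ℤ)) = ∏ i, hhF (lam i) +
        ∑ σ ∈ Finset.univ.erase (1 : Equiv.Perm (Fin l)), Equiv.Perm.sign σ •
          ∏ i, hZF ((lam (σ i) : ℤ) - ((σ i).1 : ℤ) + (i.1 : ℤ)) := by
      rw [schurF, Matrix.det_apply, ← Finset.add_sum_erase _ _ (Finset.mem_univ 1)]
      congr 1
      simp [hZF_natCast]
    rw [← sub_eq_iff_eq_add] at hdet
    rw [← hdet]
    refine schurSpan.sub_mem (AddSubgroup.subset_closure ⟨l, lam, hτ, rfl⟩)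
      (schurSpan.sum_mem fun σ hσ => ?_)
    have hmem : ∏ i, hZF ((lam (σ i) : ℤ) - ((σ i).1 : ℤ) + (i.1 : ℤ)) ∈ schurSpan := by
      by_cases hneg : ∃ i, (lam (σ i) : ℤ) - ((σ i).1 : ℤ) + (i.1 : ℤ) < 0
      · obtain ⟨i, hi⟩ := hneg
        rw [Finset.prod_eq_zero (Finset.mem_univ i) (by rw [hZF, if_neg (by omega)])]
        exact schurSpan.zero_mem
      · push Not at hneg
        choose μ hμ using fun i => Int.eq_ofNat_of_zero_le (hneg i)
        have hlt := sum_sq_lt (fun i => (lam i : ℤ)) (fun i j hij => Int.ofNat_le.mpr (hτ hij)) σ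
          (Finset.ne_of_mem_erase hσ)
        simp only [hμ] at hlt ⊢
        have hsum : ∑ i, μ i = ∑ i, lam i := by
          have : ∑ i, (μ i : ℤ) = ∑ i, (lam i : ℤ) := by
            simp only [← hμ]
            rw [Finset.sum_add_distrib, Finset.sum_sub_distrib,
              Equiv.sum_comp σ (fun i => (lam i : ℤ)), Equiv.sum_comp σ (fun i => (i.1 : ℤ))]
            ring
          exact_mod_cast this
        have hlt' : ∑ i, lam i ^ 2 < ∑ i, μ i ^ 2 := by exact_mod_cast hlt
        have hle : ∑ i, μ i ^ 2 ≤ (∑ i, μ i) ^ 2 :=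
          Finset.sum_sq_le_sq_sum_of_nonneg (fun i _ => Nat.zero_le _)
        simp only [hZF_natCast]
        rw [hsum] at hle
        exact ih (M - (∑ i, μ i ^ 2 - ∑ i, lam i ^ 2)) (by omega) μ (by rw [hsum]; omega)
    rcases Int.units_eq_one_or (Equiv.Perm.sign σ) with h | h <;> rw [h]
    · simpa using hmem
    · simpa using hmem

lemma single_smul_mem (k m : ℤ) {P : LamF} (hP : P ∈ schurSpan) :
    Finsupp.single m (qq ^ k • P) ∈ SchurLattice := by
  induction hP using AddSubgroup.closure_induction with
  | mem x hx =>
    obtain ⟨l, lam, hl, rfl⟩ := hx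
    exact AddSubgroup.subset_closure ⟨k, m, l, lam, hl, by rw [Finsupp.smul_single]⟩
  | zero => simp
  | add x y _ _ hx hy =>
    rw [smul_add, Finsupp.single_add]
    exact SchurLattice.add_mem hx hy
  | neg x _ hx =>
    rw [smul_neg, Finsupp.single_neg]
    exact SchurLattice.neg_mem hx

/-- One half of the identification of the lattice with `intA ⊗ ℤ[ℤα]`; the other half is
`schurF_mem`. -/
lemma single_mem (m : ℤ) {P : LamF} (hP : P ∈ intA) : Finsupp.single m P ∈ SchurLattice := by
  rw [intA, Subring.mem_closure_iff] at hP
  induction hP using AddSubgroup.closure_induction with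
  | mem x hx =>
    have : ∃ (k : ℤ) (L : List ℕ), x = qq ^ k • (L.map hhF).prod := by
      induction hx using Submonoid.closure_induction with
      | mem x hx =>
        rcases hx with (rfl | rfl) | ⟨k, rfl⟩
        · exact ⟨1, [], by simp [MvPolynomial.smul_eq_C_mul]⟩
        · exact ⟨-1, [], by simp [MvPolynomial.smul_eq_C_mul]⟩
        · exact ⟨0, [k], by simp⟩
      | one => exact ⟨0, [], by simp⟩
      | mul x y _ _ hx hy =>
        obtain ⟨k, L, rfl⟩ := hx
        obtain ⟨k', L', rfl⟩ := hy
        exact ⟨k + k', L ++ L', by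
          rw [List.map_append, List.prod_append, smul_mul_smul_comm, zpow_add₀ qq_ne]⟩
    obtain ⟨k, L, rfl⟩ := this
    refine single_smul_mem k m ?_
    rw [← Fin.prod_univ_fun_getElem]
    exact prod_hhF_mem _ _ _ le_add_self
  | zero => simp
  | add x y _ _ hx hy =>
    rw [Finsupp.single_add]
    exact SchurLattice.add_mem hx hy
  | neg x _ hx =>
    rw [Finsupp.single_neg]
    exact SchurLattice.neg_mem hx

lemma schurF_mem {l : ℕ} (ρ : Fin l → ℤ) : schurF ρ ∈ intA := by
  rw [schurF, Matrix.det_apply]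
  refine intA.sum_mem fun σ _ => ?_
  have h : ∏ i, (Matrix.of fun i j : Fin l => hZF (ρ i - (i.1 : ℤ) + (j.1 : ℤ))) (σ i) i
      ∈ intA := by
    refine intA.prod_mem fun i _ => ?_
    rw [Matrix.of_apply, hZF]
    split_ifs
    exacts [hhF_mem _, intA.zero_mem]
  rcases Int.units_eq_one_or (Equiv.Perm.sign σ) with h' | h' <;> rw [h']
  · simpa using h
  · simpa using h

end SchurSpan

/-! ### Divided powers of the currents -/

section Assembly

lemma qq_sq_ne_one : qq ^ 2 ≠ 1 := by
  intro h
  rw [qq, ← RatFunc.algebraMap_X, ← map_pow, ← map_one (algebraMap (Polynomial ℚ) (RatFunc ℚ))] at h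
  have h2 := congrArg Polynomial.natDegree (RatFunc.algebraMap_injective ℚ h)
  simp at h2

/-- The geometric sum in `u²` is a power of `u` times a quantum integer. -/
lemma geom_quantum (u : Fq) (hu : u ≠ 0) (hu2 : u ^ 2 ≠ 1) (k : ℕ) :
    ∑ j ∈ Finset.range (k+1), (u ^ 2) ^ j
      = u ^ k * ((u ^ (k+1) - u⁻¹ ^ (k+1)) / (u - u⁻¹)) := by
  have h1 : u ^ 2 - 1 ≠ 0 := sub_ne_zero.mpr hu2
  have h2 : u - u⁻¹ ≠ 0 := by
    intro h
    apply h1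
    have : u * (u - u⁻¹) = u ^ 2 - 1 := by rw [mul_sub, mul_inv_cancel₀ hu, sq]
    rw [← this, h, mul_zero]
  rw [geom_sum_eq hu2, ← mul_div_assoc, div_eq_div_iff h1 h2]
  have h4 : u * u⁻¹ = 1 := mul_inv_cancel₀ hu
  have h5 : u ^ k * u⁻¹ ^ k = 1 := by rw [← mul_pow, h4, one_pow]
  rw [← pow_mul, show 2 * (k + 1) = (k + k) + 2 by ring]
  simp only [pow_add, pow_succ, pow_zero, one_mul]
  linear_combination (u ^ 2 * u⁻¹ - u⁻¹) * h5 + (u - u * u ^ (k * 2)) * h4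

/-- The `q²`-factorial agrees with the quantum factorial up to a power of `q`. -/
lemma tfact_sq (r : ℕ) : ∃ e : ℤ, tfact (qq ^ 2) r = qq ^ e * qfact r := by
  refine ⟨((∑ k ∈ Finset.range r, k : ℕ) : ℤ), ?_⟩
  rw [tfact, qfact, zpow_natCast, ← Finset.prod_pow_eq_pow_sum, ← Finset.prod_mul_distrib]
  exact Finset.prod_congr rfl fun k _ => geom_quantum qq qq_ne qq_sq_ne_one k

/-- The `q⁻²`-factorial agrees with the quantum factorial up to a power of `q`. -/
lemma tfact_inv_sq (r : ℕ) : ∃ e : ℤ, tfact (qq⁻¹ ^ 2) r = qq ^ e * qfact r := by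
  refine ⟨-((∑ k ∈ Finset.range r, k : ℕ) : ℤ), ?_⟩
  rw [tfact, qfact, zpow_neg, ← inv_zpow, zpow_natCast, ← Finset.prod_pow_eq_pow_sum,
    ← Finset.prod_mul_distrib]
  refine Finset.prod_congr rfl fun k _ => ?_
  rw [geom_quantum qq⁻¹ (inv_ne_zero qq_ne)
    (by rw [inv_pow]; exact inv_ne_one.mpr qq_sq_ne_one) k, inv_inv,
    ← neg_sub (qq ^ (k+1)), ← neg_sub qq, neg_div_neg_eq]

/-- The common shape of `X_n^±`: on `P e^{mα}` it is `φ_{cf m}(Dsub d P) e^{(m+s)α}`. -/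
def vertexOp (H : ℤ → LamF) (d : ℕ → Fq) (cf : ℤ → ℤ) (s : ℤ) : W →+ W :=
  Finsupp.liftAddHom fun m => (Finsupp.singleAddHom (m + s)).comp
    ((phi1 H (cf m)).toAddMonoidHom.comp (Dsub d : LamF →+* Polynomial LamF).toAddMonoidHom)

lemma vertexOp_apply (H : ℤ → LamF) (d : ℕ → Fq) (cf : ℤ → ℤ) (s : ℤ) (w : W) :
    vertexOp H d cf s w
      = w.sum fun m P => Finsupp.single (m + s) (phi1 H (cf m) (Dsub d P)) := rfl

lemma vertexOp_single (H : ℤ → LamF) (d : ℕ → Fq) (cf : ℤ → ℤ) (s m : ℤ) (P : LamF) :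
    vertexOp H d cf s (Finsupp.single m P)
      = Finsupp.single (m + s) (phi1 H (cf m) (Dsub d P)) := by
  rw [vertexOp_apply, Finsupp.sum_single_index]
  simp

/-- The shift of `e^{mα}` lowers the index `cf m` by `2` at each step, as in `iterX`. -/
lemma iterate_vertexOp (H : ℤ → LamF) (d : ℕ → Fq) (cf : ℤ → ℤ) (s : ℤ)
    (hcf : ∀ m, cf (m + s) = cf m - 2) (m : ℤ) (P : LamF) (r : ℕ) :
    (vertexOp H d cf s)^[r] (Finsupp.single m P) = Finsupp.single (m + s * r)
      (iterX H (Dsub d : LamF →+* Polynomial LamF) (cf m) P r) := by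
  have hc : ∀ r : ℕ, cf (m + s * r) = cf m - 2 * r := by
    intro r
    induction r with
    | zero => simp
    | succ r ih =>
      rw [show m + s * ((r + 1 : ℕ) : ℤ) = m + s * r + s by push_cast; ring, hcf, ih]
      push_cast; ring
  induction r with
  | zero => simp [iterX]
  | succ r ih =>
    rw [Function.iterate_succ_apply', ih, vertexOp_single, hc, iterX,
      show m + s * ((r + 1 : ℕ) : ℤ) = m + s * r + s by push_cast; ring]
    rfl

lemma Xp_eq (i n : ℤ) :
    Xp i n = vertexOp HZp (fun n => -((qq⁻¹) ^ n)) (fun m => - n - 1 - 2*m - i) 1 := by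
  funext w
  rw [vertexOp_apply, Xp]
  refine Finsupp.sum_congr fun m _ => ?_
  rw [← sum_DopF_eq_phi1]
  congr 1
  refine Finset.sum_congr rfl fun j _ => ?_
  rw [show (j : ℤ) - n - 1 - 2 * m - i = - n - 1 - 2 * m - i + j by ring]
  rfl

lemma Xm_eq (i n : ℤ) :
    Xm i n = vertexOp HZm (fun _ => 1) (fun m => 2*m + i - n - 1) (-1) := by
  funext w
  rw [vertexOp_apply, Xm]
  refine Finsupp.sum_congr fun m _ => ?_
  rw [← sum_DopF_eq_phi1, sub_eq_add_neg]
  congr 1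
  refine Finset.sum_congr rfl fun j _ => ?_
  rw [show (j : ℤ) + 2 * m + i - n - 1 = 2 * m + i - n - 1 + j by ring]
  rfl

/-- Divided powers of a vertex operator whose contraction is `(1 - w z)(1 - t w z)` preserve the
lattice, provided its ingredients are integral and the `t`-factorial is `[r]!` up to a unit. -/
lemma divpow_vertexOp_mem (c d : ℕ → Fq) (t : Fq) (cf : ℤ → ℤ) (s : ℤ)
    (hcf : ∀ m, cf (m + s) = cf m - 2)
    (hcd : ∀ n, c (n+1) * d (n+1) = -(1 + t ^ (n+1)))
    (hH : ∀ n, genZ c n ∈ intA) (hd : ∀ P ∈ intA, Dsub d P ∈ intP) (r : ℕ)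
    (ht : ∃ e : ℤ, tfact t r = qq ^ e * qfact r) (w : W) (hw : w ∈ SchurLattice) :
    divpow (vertexOp (genZ c) d cf s) r w ∈ SchurLattice := by
  rw [divpow]
  induction hw using AddSubgroup.closure_induction with
  | mem x hx =>
    obtain ⟨k, m, l, lam, -, rfl⟩ := hx
    have hP : C (qq ^ k) * schurF (fun a => (lam a : ℤ)) ∈ intA :=
      intA.mul_mem (C_zpow_mem k) (schurF_mem _)
    rw [Finsupp.smul_single, MvPolynomial.smul_eq_C_mul]
    generalize C (qq ^ k) * schurF (fun a => (lam a : ℤ)) = P at hP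
    rw [iterate_vertexOp _ _ _ _ hcf, iterX_eq (genZ c) _ (C t) (Dsub_genZ c d t hcd) (Dsub_C d t)
      (fun r P => Dmul d r P) (Dmul_zero d) (Dext_Dmul d) (rename_Dmul d), Finsupp.smul_single]
    obtain ⟨e, he⟩ := ht
    have ht' : tfact (C t : LamF) r = C (tfact t r) := by
      simp only [tfact, map_prod, map_sum, map_pow]
    -- `[r]!` is in fact nonzero, but its vanishing would make the claim trivial
    by_cases hq : qfact r = 0
    · rw [hq, inv_zero, zero_smul, Finsupp.single_zero]
      exact SchurLattice.zero_mem
    · rw [ht', he, ← MvPolynomial.smul_eq_C_mul, smul_smul, mul_left_comm, inv_mul_cancel₀ hq,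
        mul_one, MvPolynomial.smul_eq_C_mul]
      refine single_mem _ (intA.mul_mem (C_zpow_mem e) (Phi_mem_intA _ hH _ _ ?_))
      exact intM.mul_mem (intM.prod_mem fun i _ => intM.pow_mem (X_mem_intM i) i)
        (intM.mul_mem (vdm_mem_intM r) (Dmul_mem_intM d hd r hP))
  | zero =>
    rw [iterate_map_zero, smul_zero]
    exact SchurLattice.zero_mem
  | add x y _ _ hx hy =>
    rw [iterate_map_add, smul_add]
    exact SchurLattice.add_mem hx hy
  | neg x _ hx =>
    rw [iterate_map_neg, smul_neg]
    exact SchurLattice.neg_mem hx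

end Assembly

/-- integrality of the Schur lattice under divided powers: for
`i ∈ {0,1}`, `n ∈ ℤ` and `r ≥ 1`, `X_n^{+(r)}(ℒ_i) ⊆ ℒ_i` and `X_n^{−(r)}(ℒ_i) ⊆ ℒ_i`. -/
theorem schur_lattice_divided_powers (i : ℤ) (hi : i = 0 ∨ i = 1) (n : ℤ) (r : ℕ)
    (hr : 1 ≤ r) (w : W) (hw : w ∈ SchurLattice) :
    divpow (Xp i n) r w ∈ SchurLattice ∧ divpow (Xm i n) r w ∈ SchurLattice := by
  rw [Xp_eq, Xm_eq]
  constructor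
  · refine divpow_vertexOp_mem (fun n => (1 + qq ^ (2*n)) * (qq⁻¹) ^ n) _ (qq⁻¹ ^ 2) _ _
      (fun m => by ring) (fun k => ?_) HZp_mem Dsub_p_mem r (tfact_inv_sq r) w hw
    have h1 : qq ^ (2 * (k+1)) * (qq⁻¹ ^ (k+1) * qq⁻¹ ^ (k+1)) = 1 := by
      rw [two_mul, pow_add, mul_mul_mul_comm, ← mul_pow, mul_inv_cancel₀ qq_ne, one_pow, mul_one]
    rw [← pow_mul, two_mul, pow_add]
    linear_combination -h1
  · refine divpow_vertexOp_mem (fun n => -(1 + qq ^ (2*n))) _ (qq ^ 2) _ _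
      (fun m => by ring) (fun k => ?_) HZm_mem Dsub_m_mem r (tfact_sq r) w hw
    rw [← pow_mul, mul_one]
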